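/- arXiv:2102.07600 — 2 statements merged into one kernel-verified Lean document; each statement's English description precedes it below -/
import Mathlib

section
/- Piece-wise constant stretched motions (Proposition 4.1): Let σ₀ > 0 and σ₁ > 1. For t ∈ [0,T(ζ)) define σ(t) = σ₀ + σ₁(N₁−τ)t/(N₁−(ζt+τ)); for s ≥ σ(t) define χ(s,t) = N₁σ₀ + (ζt+τ)(s−σ₀) + σ₁(N₁−τ)t and N(s,t) = ζt+τ; and for 0 ≤ s ≤ σ(t) define χ(s,t) = N₁s and N(s,t) = ζt+τ + σ′(t)²(N₁−(ζt+τ)). Then for every T < T(ζ), the pair (χ,N) restricted to [0,∞)×[0,T] is a classical shock solution with shock front σ; moreover σ(0) = σ₀, σ′(0) = σ₁, σ′(t) = σ₁(N₁−τ)²/(N₁−(ζt+τ))² ≥ σ₁ > 1, the stretch is piece-wise constant (χ_s(s,t) = N₁ for s ∈ [0,σ(t)) and χ_s(s,t) = ζt+τ for s ∈ (σ(t),∞)), and (χ,N) is the unique classical shock solution on [0,T(ζ)) with piece-wise constant stretch of this form satisfying σ(0) = σ₀ and σ′(0) = σ₁. -/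
open Set Filter Topology

noncomputable section

/-- The uncurried version of a function of two real variables `(s, t)`. -/
def uc (χ : ℝ → ℝ → ℝ) : ℝ × ℝ → ℝ := fun p => χ p.1 p.2

/-- Directional partial derivative of `f` within the set `S` at `p` in direction `v`. -/
def pder (f : ℝ × ℝ → ℝ) (S : Set (ℝ × ℝ)) (v : ℝ × ℝ) (p : ℝ × ℝ) : ℝ :=
  fderivWithin ℝ f S p v

/-- The extensible region `{(s,t) : t ∈ [0,T], s ≥ σ(t)}`. -/
def Ereg (σ : ℝ → ℝ) (T : ℝ) : Set (ℝ × ℝ) :=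
  {p : ℝ × ℝ | p.2 ∈ Icc 0 T ∧ σ p.2 ≤ p.1}

/-- The extensible region for all nonnegative times. -/
def EregInf (σ : ℝ → ℝ) : Set (ℝ × ℝ) :=
  {p : ℝ × ℝ | 0 ≤ p.2 ∧ σ p.2 ≤ p.1}

/-- D'Alembert's solution of the wave equation `χ_tt = χ_ss` with data `(χ₀, χ₁)`. -/
def dAlem (χ₀ χ₁ : ℝ → ℝ) (s t : ℝ) : ℝ :=
  (χ₀ (s + t) + χ₀ (s - t)) / 2 + (∫ ξ in (s - t)..(s + t), χ₁ ξ) / 2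

/-- Classical shock front initial data `(χ₀, χ₁, N₀)` with initial shock front `σ₀`,
threshold tension `N₁`, lower tension bound `η` and tension `ζ t + τ` prescribed at
the infinite end.  One-sided values and derivatives at `σ₀` are taken from the right,
i.e. within `Ici σ₀`. -/
structure IsShockData (N₁ η τ ζ σ₀ : ℝ) (χ₀ χ₁ N₀ : ℝ → ℝ) : Prop where
  sigma0_pos : 0 < σ₀
  chi0_cont : ContinuousOn χ₀ (Ici 0)
  chi1_bdd : ∀ K : ℝ, ∃ M, ∀ s ∈ Icc (0 : ℝ) K, |χ₁ s| ≤ M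
  N0_bdd : ∀ K : ℝ, ∃ M, ∀ s ∈ Icc (0 : ℝ) K, |N₀ s| ≤ M
  chi0_smooth : ContDiffOn ℝ 2 χ₀ (Ici σ₀)
  chi1_smooth : ContDiffOn ℝ 1 χ₁ (Ici σ₀)
  N0_smooth : ContDiffOn ℝ 1 N₀ (Ici σ₀)
  N0_eq : ∀ s ∈ Ici σ₀, N₀ s = derivWithin χ₀ (Ici σ₀) s
  N0_gt : ∀ s ∈ Ici σ₀, η < N₀ s
  N0_lt : ∀ s ∈ Ici σ₀, N₀ s < N₁
  chi0_lim : Tendsto (derivWithin χ₀ (Ici σ₀)) atTop (𝓝 τ)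
  chi1_lim : Tendsto (derivWithin χ₁ (Ici σ₀)) atTop (𝓝 ζ)
  front : χ₀ σ₀ = N₁ * σ₀
  speed : 1 < χ₁ σ₀ / (N₁ - derivWithin χ₀ (Ici σ₀) σ₀)
  inext_chi0 : ∀ s ∈ Icc 0 σ₀, χ₀ s = N₁ * s
  inext_chi1 : ∀ s ∈ Ico 0 σ₀, χ₁ s = 0
  inext_N0 : ∀ s ∈ Ico 0 σ₀,
    N₀ s = N₀ σ₀ + (χ₁ σ₀ / (N₁ - derivWithin χ₀ (Ici σ₀) σ₀)) ^ 2 * (N₁ - N₀ σ₀)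

/-- `(χ, N)` together with the shock front `σ` is a classical shock solution on the
time interval `[0,T]` with initial data `(χ₀, χ₁, N₀)` and initial shock front `σ₀`.
Partial derivatives in the extensible region are taken within `Ereg σ T`, and the
shock speed is `derivWithin σ (Icc 0 T)`. -/
structure IsShockSolution (N₁ η τ ζ σ₀ T : ℝ) (χ₀ χ₁ N₀ : ℝ → ℝ)
    (χ N : ℝ → ℝ → ℝ) (σ : ℝ → ℝ) : Prop where
  chi_cont : ContinuousOn (uc χ) (Ici 0 ×ˢ Icc 0 T)
  chit_bdd : ∀ K : ℝ, ∃ M, ∀ p ∈ Ereg σ T, p.1 ≤ K → |pder (uc χ) (Ereg σ T) (0, 1) p| ≤ M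
  N_bdd : ∀ K : ℝ, ∃ M, ∀ s ∈ Icc (0 : ℝ) K, ∀ t ∈ Icc (0 : ℝ) T, |N s t| ≤ M
  sigma_smooth : ContDiffOn ℝ 2 σ (Icc 0 T)
  sigma_ge : ∀ t ∈ Icc 0 T, σ₀ ≤ σ t
  sigma_init : σ 0 = σ₀
  chi_smooth : ContDiffOn ℝ 2 (uc χ) (Ereg σ T)
  N_smooth : ContDiffOn ℝ 1 (uc N) (Ereg σ T)
  N_eq : ∀ p ∈ Ereg σ T, N p.1 p.2 = pder (uc χ) (Ereg σ T) (1, 0) p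
  N_gt : ∀ p ∈ Ereg σ T, η < N p.1 p.2
  N_lt : ∀ p ∈ Ereg σ T, N p.1 p.2 < N₁
  front : ∀ t ∈ Icc 0 T, χ (σ t) t = N₁ * σ t
  sigma_der : ∀ t ∈ Icc 0 T,
    derivWithin σ (Icc 0 T) t = pder (uc χ) (Ereg σ T) (0, 1) (σ t, t) / (N₁ - N (σ t) t)
  sigma_der_gt : ∀ t ∈ Icc 0 T, 1 < derivWithin σ (Icc 0 T) t
  inext_chi : ∀ t ∈ Icc 0 T, ∀ s ∈ Icc 0 (σ t), χ s t = N₁ * s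
  inext_N : ∀ t ∈ Icc 0 T, ∀ s ∈ Ico 0 (σ t),
    N s t = N (σ t) t + (derivWithin σ (Icc 0 T) t) ^ 2 * (N₁ - N (σ t) t)
  inext_N_gt : ∀ t ∈ Icc 0 T, ∀ s ∈ Ico 0 (σ t), N₁ < N s t
  wave : ∀ p ∈ Ereg σ T,
    pder (pder (uc χ) (Ereg σ T) (0, 1)) (Ereg σ T) (0, 1) p
      = pder (pder (uc χ) (Ereg σ T) (1, 0)) (Ereg σ T) (1, 0) p
  bc_infty : ∀ t ∈ Icc 0 T,
    Tendsto (fun s => pder (uc χ) (Ereg σ T) (1, 0) (s, t)) atTop (𝓝 (ζ * t + τ))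
  init_chi : ∀ s ∈ Ici σ₀, χ s 0 = χ₀ s
  init_chit : ∀ s ∈ Ici σ₀, pder (uc χ) (Ereg σ T) (0, 1) (s, 0) = χ₁ s

lemma ereg_uniqueDiffOn (σ : ℝ → ℝ) (T : ℝ) (hT : 0 < T)
    (hσ : DifferentiableOn ℝ σ (Icc 0 T)) : UniqueDiffOn ℝ (Ereg σ T) := by
  have himg : Ereg σ T = (fun q : ℝ × ℝ => (q.1 + σ q.2, q.2)) '' (Ici 0 ×ˢ Icc 0 T) := by
    ext ⟨s, t⟩
    simp only [Ereg, mem_ofPred_eq, mem_image, mem_prod, mem_Ici, Prod.mk.injEq, Prod.exists]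
    constructor
    · rintro ⟨h1, h2⟩
      exact ⟨s - σ t, t, ⟨by linarith, h1⟩, by ring, rfl⟩
    · rintro ⟨a, b, ⟨h1, h2⟩, h3, rfl⟩
      exact ⟨h2, by linarith⟩
  rw [himg]
  have hu : UniqueDiffOn ℝ (Ici (0:ℝ) ×ˢ Icc (0:ℝ) T) :=
    (uniqueDiffOn_Ici 0).prod (uniqueDiffOn_Icc hT)
  refine hu.image (f' := fun q =>
    (ContinuousLinearMap.fst ℝ ℝ ℝ +
      (derivWithin σ (Icc 0 T) q.2) • ContinuousLinearMap.snd ℝ ℝ ℝ).prod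
      (ContinuousLinearMap.snd ℝ ℝ ℝ)) ?_ ?_
  · rintro q hq
    have h1 : HasFDerivWithinAt (fun q : ℝ × ℝ => σ q.2)
        ((derivWithin σ (Icc 0 T) q.2) • ContinuousLinearMap.snd ℝ ℝ ℝ)
        (Ici 0 ×ˢ Icc 0 T) q :=
      HasDerivWithinAt.comp_hasFDerivWithinAt q (hσ q.2 hq.2).hasDerivWithinAt
        hasFDerivWithinAt_snd (fun x hx => hx.2)
    exact (hasFDerivWithinAt_fst.add h1).prodMk hasFDerivWithinAt_snd
  · intro q _
    apply Function.Surjective.denseRange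
    rintro ⟨a, b⟩
    refine ⟨(a - derivWithin σ (Icc 0 T) q.2 * b, b), ?_⟩
    simp

lemma pder_formula (σ : ℝ → ℝ) (T : ℝ) (hu : UniqueDiffOn ℝ (Ereg σ T))
    (f : ℝ × ℝ → ℝ) (w : ℝ → ℝ) (a b d : ℝ)
    (hf : ∀ q ∈ Ereg σ T, f q = w q.2 + (a * q.2 + b) * q.1)
    (p : ℝ × ℝ) (hp : p ∈ Ereg σ T) (hw : HasDerivWithinAt w d (Icc 0 T) p.2) :
    pder f (Ereg σ T) (1, 0) p = a * p.2 + b ∧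
    pder f (Ereg σ T) (0, 1) p = d + a * p.1 := by
  have h1 : HasFDerivWithinAt (fun q : ℝ × ℝ => w q.2)
        (d • ContinuousLinearMap.snd ℝ ℝ ℝ) (Ereg σ T) p :=
      HasDerivWithinAt.comp_hasFDerivWithinAt p hw
        hasFDerivWithinAt_snd (fun x hx => hx.1)
  have h2 : HasFDerivWithinAt (fun q : ℝ × ℝ => a * q.2 + b)
        (a • ContinuousLinearMap.snd ℝ ℝ ℝ) (Ereg σ T) p :=
    (hasFDerivWithinAt_snd.const_mul a).add_const b
  have h3 := (h1.add (h2.mul hasFDerivWithinAt_fst)).congr (f₁ := f)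
    (fun q hq => by rw [hf q hq]; rfl) (by rw [hf p hp]; rfl)
  unfold pder
  rw [h3.fderivWithin (hu p hp)]
  constructor <;> simp
  ring

lemma pder_second (σ : ℝ → ℝ) (T : ℝ) (hT : 0 < T) (hu : UniqueDiffOn ℝ (Ereg σ T))
    (f : ℝ × ℝ → ℝ) (w : ℝ → ℝ) (a b : ℝ)
    (hf : ∀ q ∈ Ereg σ T, f q = w q.2 + (a * q.2 + b) * q.1)
    (hw : ContDiffOn ℝ 2 w (Icc 0 T)) (p : ℝ × ℝ) (hp : p ∈ Ereg σ T) :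
    pder (pder f (Ereg σ T) (1, 0)) (Ereg σ T) (1, 0) p = 0 ∧
    pder (pder f (Ereg σ T) (0, 1)) (Ereg σ T) (0, 1) p
      = derivWithin (derivWithin w (Icc 0 T)) (Icc 0 T) p.2 := by
  have hI := uniqueDiffOn_Icc hT
  have hw1 : DifferentiableOn ℝ w (Icc 0 T) := hw.differentiableOn (by norm_num)
  have hw2 : DifferentiableOn ℝ (derivWithin w (Icc 0 T)) (Icc 0 T) :=
    (hw.derivWithin (m := 1) hI (by norm_num)).differentiableOn (by norm_num)
  have key := fun q (hq : q ∈ Ereg σ T) =>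
    pder_formula σ T hu f w a b _ hf q hq (hw1 q.2 hq.1).hasDerivWithinAt
  constructor
  · have := (pder_formula σ T hu (pder f (Ereg σ T) (1, 0)) (fun t => a * t + b) 0 0 a
      (fun q hq => by rw [(key q hq).1]; ring) p hp
      (by simpa using (((hasDerivAt_id p.2).const_mul a).add_const b).hasDerivWithinAt)).1
    rw [this]; ring
  · have := (pder_formula σ T hu (pder f (Ereg σ T) (0, 1)) (derivWithin w (Icc 0 T)) 0 a _
      (fun q hq => by rw [(key q hq).2]; ring) p hp (hw2 p.2 hp.1).hasDerivWithinAt).2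
    rw [this]; ring

lemma front_hasDerivAt (N₁ τ ζ σ₀ σ₁ t : ℝ) (ht : ζ * t < N₁ - τ) :
    HasDerivAt (fun t => σ₀ + σ₁ * (N₁ - τ) * t / (N₁ - (ζ * t + τ)))
      (σ₁ * (N₁ - τ) ^ 2 / (N₁ - (ζ * t + τ)) ^ 2) t := by
  have hk : N₁ - (ζ * t + τ) ≠ 0 := by linarith
  have h1 : HasDerivAt (fun t : ℝ => σ₁ * (N₁ - τ) * t) (σ₁ * (N₁ - τ)) t := by
    simpa using (hasDerivAt_id t).const_mul (σ₁ * (N₁ - τ))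
  have h2 : HasDerivAt (fun t : ℝ => N₁ - (ζ * t + τ)) (-ζ) t := by
    simpa using (((hasDerivAt_id t).const_mul ζ).add_const τ).const_sub N₁
  refine ((h1.div h2 hk).const_add σ₀).congr_deriv ?_
  field_simp
  ring

lemma speed_ge (N₁ τ ζ σ₁ t : ℝ) (hτN : τ < N₁) (hζ : 0 ≤ ζ) (hσ₁ : 1 < σ₁)
    (h0 : 0 ≤ t) (ht : ζ * t < N₁ - τ) :
    σ₁ ≤ σ₁ * (N₁ - τ) ^ 2 / (N₁ - (ζ * t + τ)) ^ 2 := by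
  have hk : 0 < N₁ - (ζ * t + τ) := by linarith
  have h1 : 0 ≤ ζ * t := mul_nonneg hζ h0
  rw [le_div_iff₀ (by positivity)]
  have : (N₁ - (ζ * t + τ)) ^ 2 ≤ (N₁ - τ) ^ 2 := by
    apply pow_le_pow_left₀ hk.le; linarith
  exact mul_le_mul_of_nonneg_left this (by linarith)

lemma exists_later (N₁ τ ζ t : ℝ) (hζ : 0 ≤ ζ) (h0 : 0 ≤ t) (ht : ζ * t < N₁ - τ) :
    ∃ T, 0 < T ∧ t < T ∧ ζ * T < N₁ - τ := by
  refine ⟨t + (N₁ - τ - ζ * t) / (ζ + 1), ?_, ?_, ?_⟩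
  · have : 0 < (N₁ - τ - ζ * t) / (ζ + 1) := div_pos (by linarith) (by linarith)
    linarith
  · have : 0 < (N₁ - τ - ζ * t) / (ζ + 1) := div_pos (by linarith) (by linarith)
    linarith
  · have h : 0 < (N₁ - τ - ζ * t) / (ζ + 1) := div_pos (by linarith) (by linarith)
    have h2 : (N₁ - τ - ζ * t) / (ζ + 1) * (ζ + 1) = N₁ - τ - ζ * t := by
      field_simp
    nlinarith

/-- Existence part. -/
lemma shock_existence
    (N₁ η τ ζ σ₀ σ₁ : ℝ)
    (hτη : η < τ) (hτN : τ < N₁) (hζ : 0 ≤ ζ)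
    (hσ₀ : 0 < σ₀) (hσ₁ : 1 < σ₁)
    (σ : ℝ → ℝ) (hσdef : σ = fun t => σ₀ + σ₁ * (N₁ - τ) * t / (N₁ - (ζ * t + τ)))
    (χ : ℝ → ℝ → ℝ)
    (hχdef : χ = fun s t => if s ≤ σ t then N₁ * s
      else N₁ * σ₀ + (ζ * t + τ) * (s - σ₀) + σ₁ * (N₁ - τ) * t)
    (N : ℝ → ℝ → ℝ)
    (hNdef : N = fun s t => if s < σ t then
        (ζ * t + τ) + (σ₁ * (N₁ - τ) ^ 2 / (N₁ - (ζ * t + τ)) ^ 2) ^ 2 * (N₁ - (ζ * t + τ))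
      else ζ * t + τ) (T : ℝ) (hT : 0 < T) (hTT : ζ * T < N₁ - τ) :
      IsShockSolution N₁ η τ ζ σ₀ T (fun s => χ s 0)
        (fun s => if s < σ₀ then 0 else ζ * (s - σ₀) + σ₁ * (N₁ - τ))
        (fun s => N s 0) χ N σ := by
  have hlt : ∀ t ∈ Icc 0 T, ζ * t < N₁ - τ := fun t ht =>
    (mul_le_mul_of_nonneg_left ht.2 hζ).trans_lt hTT
  have hk : ∀ t ∈ Icc 0 T, 0 < N₁ - (ζ * t + τ) := fun t ht => by linarith [hlt t ht]
  have hσeq : ∀ t ∈ Icc 0 T, (N₁ - (ζ * t + τ)) * (σ t - σ₀) = σ₁ * (N₁ - τ) * t := by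
    intro t ht
    have := (hk t ht).ne'
    simp only [hσdef]
    field_simp
    ring
  have hder : ∀ t ∈ Icc 0 T, derivWithin σ (Icc 0 T) t
      = σ₁ * (N₁ - τ) ^ 2 / (N₁ - (ζ * t + τ)) ^ 2 := by
    intro t ht
    rw [hσdef]
    exact (front_hasDerivAt N₁ τ ζ σ₀ σ₁ t (hlt t ht)).hasDerivWithinAt.derivWithin
      (uniqueDiffOn_Icc hT t ht)
  have hsm : ContDiffOn ℝ 2 σ (Icc 0 T) := by
    rw [hσdef]
    refine contDiffOn_const.add (ContDiffOn.div (by fun_prop) (by fun_prop) ?_)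
    intro t ht
    exact (hk t ht).ne'
  have hdf : DifferentiableOn ℝ σ (Icc 0 T) := hsm.differentiableOn (by norm_num)
  have hu := ereg_uniqueDiffOn σ T hT hdf
  have hσ0 : σ 0 = σ₀ := by simp [hσdef]
  have hge : ∀ t ∈ Icc 0 T, σ₀ ≤ σ t := by
    intro t ht
    simp only [hσdef]
    have : 0 ≤ σ₁ * (N₁ - τ) * t / (N₁ - (ζ * t + τ)) :=
      div_nonneg (mul_nonneg (mul_nonneg (by linarith) (by linarith)) ht.1) (hk t ht).le
    linarith
  -- formula for χ on the extensible region
  have hχE : ∀ q ∈ Ereg σ T, uc χ q =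
      (fun t => N₁ * σ₀ - (ζ * t + τ) * σ₀ + σ₁ * (N₁ - τ) * t) q.2 + (ζ * q.2 + τ) * q.1 := by
    rintro ⟨s, t⟩ ⟨h1, h2⟩
    simp only [uc, hχdef] at *
    split_ifs with h
    · have : s = σ t := le_antisymm h h2
      subst this
      linarith [hσeq t h1]
    · ring
  have hNE : ∀ q ∈ Ereg σ T, N q.1 q.2 = ζ * q.2 + τ := by
    rintro ⟨s, t⟩ ⟨h1, h2⟩
    simp only [hNdef]
    rw [if_neg (not_lt.mpr h2)]
  have hwder : ∀ t, HasDerivAt (fun t => N₁ * σ₀ - (ζ * t + τ) * σ₀ + σ₁ * (N₁ - τ) * t)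
      (-(ζ * σ₀) + σ₁ * (N₁ - τ)) t := by
    intro t
    have h1 : HasDerivAt (fun t : ℝ => σ₁ * (N₁ - τ) * t) (σ₁ * (N₁ - τ)) t := by
      simpa using (hasDerivAt_id t).const_mul (σ₁ * (N₁ - τ))
    have h2 : HasDerivAt (fun t : ℝ => N₁ * σ₀ - (ζ * t + τ) * σ₀) (-(ζ * σ₀)) t := by
      simpa using ((((hasDerivAt_id t).const_mul ζ).add_const τ).mul_const σ₀).const_sub (N₁ * σ₀)
    exact h2.add h1
  have hp := fun p (hp : p ∈ Ereg σ T) =>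
    pder_formula σ T hu (uc χ) _ ζ τ _ hχE p hp (hwder p.2).hasDerivWithinAt
  have hmemσ : ∀ t ∈ Icc 0 T, (σ t, t) ∈ Ereg σ T := fun t ht => ⟨ht, le_rfl⟩
  have hmem0 : ∀ s ∈ Ici σ₀, (s, (0:ℝ)) ∈ Ereg σ T := fun s hs =>
    ⟨⟨le_rfl, hT.le⟩, by simpa [hσ0] using hs⟩
  have hspeed : ∀ t ∈ Icc 0 T, 1 < derivWithin σ (Icc 0 T) t := fun t ht => by
    rw [hder t ht]
    exact hσ₁.trans_le (speed_ge N₁ τ ζ σ₁ t hτN hζ hσ₁ ht.1 (hlt t ht))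
  have hNin : ∀ t ∈ Icc 0 T, ∀ s ∈ Ico 0 (σ t),
      N s t = N (σ t) t + (derivWithin σ (Icc 0 T) t) ^ 2 * (N₁ - N (σ t) t) := by
    intro t ht s hs
    rw [hder t ht, hNE _ (hmemσ t ht)]
    simp only [hNdef]
    rw [if_pos hs.2]
  refine
  { chi_cont := ?_
    chit_bdd := ?_
    N_bdd := ?_
    sigma_smooth := hsm
    sigma_ge := hge
    sigma_init := hσ0
    chi_smooth := ?_
    N_smooth := ?_
    N_eq := fun p hpp => by rw [hNE p hpp, (hp p hpp).1]
    N_gt := fun p hpp => by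
      rw [hNE p hpp]
      have := mul_nonneg hζ hpp.1.1
      linarith
    N_lt := fun p hpp => by
      rw [hNE p hpp]
      linarith [hk p.2 hpp.1]
    front := fun t ht => by simp [hχdef]
    sigma_der := ?_
    sigma_der_gt := hspeed
    inext_chi := fun t ht s hs => by simp only [hχdef]; rw [if_pos hs.2]
    inext_N := hNin
    inext_N_gt := ?_
    wave := ?_
    bc_infty := ?_
    init_chi := fun _ _ => rfl
    init_chit := ?_ }
  · have hc : ContinuousOn (fun p : ℝ × ℝ => N₁ * p.1 -
        (N₁ - (ζ * p.2 + τ)) * max 0 (p.1 - σ p.2)) (Ici 0 ×ˢ Icc 0 T) := by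
      have : ContinuousOn (fun p : ℝ × ℝ => σ p.2) (Ici 0 ×ˢ Icc 0 T) :=
        hdf.continuousOn.comp continuousOn_snd (fun p hp => hp.2)
      have hm : ContinuousOn (fun p : ℝ × ℝ => max 0 (p.1 - σ p.2)) (Ici 0 ×ˢ Icc 0 T) :=
        ContinuousOn.sup continuousOn_const (continuousOn_fst.sub this)
      exact ContinuousOn.sub (by fun_prop) (ContinuousOn.mul (by fun_prop) hm)
    refine hc.congr ?_
    rintro ⟨s, t⟩ ⟨h1, h2⟩
    have h3 := hσeq t h2
    simp only [uc]
    have : χ s t = if s ≤ σ t then N₁ * s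
      else N₁ * σ₀ + (ζ * t + τ) * (s - σ₀) + σ₁ * (N₁ - τ) * t := by rw [hχdef]
    rw [this]
    split_ifs with h
    · rw [max_eq_left (by linarith)]; ring
    · rw [max_eq_right (by linarith)]; linear_combination -h3
  · intro K
    refine ⟨ζ * (K - σ₀) + σ₁ * (N₁ - τ), fun p hpp hK => ?_⟩
    rw [(hp p hpp).2]
    have h1 : σ₀ ≤ p.1 := (hge _ hpp.1).trans hpp.2
    have h2 : 0 ≤ ζ * (p.1 - σ₀) := mul_nonneg hζ (by linarith)
    have h3 : ζ * (p.1 - σ₀) ≤ ζ * (K - σ₀) := mul_le_mul_of_nonneg_left (by linarith) hζ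
    have h4 : 0 ≤ σ₁ * (N₁ - τ) := mul_nonneg (by linarith) (by linarith)
    rw [abs_le]
    constructor <;> nlinarith
  · intro K
    have hc1 : ContinuousOn (fun t => (ζ * t + τ) +
        (σ₁ * (N₁ - τ) ^ 2 / (N₁ - (ζ * t + τ)) ^ 2) ^ 2 * (N₁ - (ζ * t + τ))) (Icc 0 T) := by
      have : ContinuousOn (fun t => σ₁ * (N₁ - τ) ^ 2 / (N₁ - (ζ * t + τ)) ^ 2) (Icc 0 T) := by
        refine ContinuousOn.div (by fun_prop) (by fun_prop) ?_
        intro t ht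
        exact pow_ne_zero _ (hk t ht).ne'
      fun_prop
    have hc2 : ContinuousOn (fun t => ζ * t + τ) (Icc 0 T) := by fun_prop
    obtain ⟨C1, h1⟩ := isCompact_Icc.exists_bound_of_continuousOn hc1
    obtain ⟨C2, h2⟩ := isCompact_Icc.exists_bound_of_continuousOn hc2
    refine ⟨max C1 C2, fun s _ t ht => ?_⟩
    simp only [hNdef]
    split_ifs
    · exact (h1 t ht).trans (le_max_left _ _)
    · exact (h2 t ht).trans (le_max_right _ _)
  · refine ContDiffOn.congr ?_ hχE
    apply ContDiff.contDiffOn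
    fun_prop
  · refine ContDiffOn.congr (f := fun q : ℝ × ℝ => ζ * q.2 + τ) ?_ (fun q hq => hNE q hq)
    apply ContDiff.contDiffOn
    fun_prop
  · intro t ht
    rw [hder t ht, (hp _ (hmemσ t ht)).2, hNE _ (hmemσ t ht)]
    have h0 := (hk t ht).ne'
    have h3 := hσeq t ht
    simp only
    rw [div_eq_div_iff (pow_ne_zero _ h0) h0]
    linear_combination (-ζ * (N₁ - (ζ * t + τ))) * h3
  · intro t ht s hs
    rw [hNin t ht s hs, hNE _ (hmemσ t ht)]
    have h1 := hspeed t ht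
    have h2 := hk t ht
    have h3 : 1 < (derivWithin σ (Icc 0 T) t) ^ 2 := by nlinarith
    simp only
    nlinarith
  · intro p hpp
    have h := pder_second σ T hT hu (uc χ)
      (fun t => N₁ * σ₀ - (ζ * t + τ) * σ₀ + σ₁ * (N₁ - τ) * t) ζ τ hχE (by fun_prop) p hpp
    rw [h.1, h.2]
    have : ∀ x ∈ Icc 0 T, derivWithin
        (fun t => N₁ * σ₀ - (ζ * t + τ) * σ₀ + σ₁ * (N₁ - τ) * t) (Icc 0 T) x
        = (fun _ => (-(ζ * σ₀) + σ₁ * (N₁ - τ))) x := fun x hx =>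
      (hwder x).hasDerivWithinAt.derivWithin (uniqueDiffOn_Icc hT x hx)
    rw [derivWithin_congr this (this _ hpp.1)]
    simp
  · intro t ht
    refine Tendsto.congr' ?_ tendsto_const_nhds
    filter_upwards [eventually_ge_atTop (σ t)] with s hs
    rw [(hp (s, t) ⟨ht, hs⟩).1]
  · intro s hs
    rw [(hp _ (hmem0 s hs)).2, if_neg (not_lt.mpr hs)]
    ring

/-- Uniqueness part. -/
lemma shock_uniqueness
    (N₁ η τ ζ σ₀ σ₁ : ℝ) (hζ : 0 ≤ ζ) (hσ₀ : 0 < σ₀)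
    (χc Nc : ℝ → ℝ → ℝ) (σc : ℝ → ℝ) (χ₁c : ℝ → ℝ) (T : ℝ) (hT : 0 < T) (hTT : ζ * T < N₁ - τ)
    (hS : IsShockSolution N₁ η τ ζ σ₀ T (fun s => χc s 0) χ₁c (fun s => Nc s 0) χc Nc σc)
    (hP : ∀ t, 0 ≤ t → ζ * t < N₁ - τ → ∀ s : ℝ,
        (0 ≤ s → s < σc t → deriv (fun x => χc x t) s = N₁) ∧
        (σc t < s → deriv (fun x => χc x t) s = ζ * t + τ))
    (hd0 : derivWithin σc (Ici 0) 0 = σ₁) (hη : 0 < η) (hτη : η < τ) :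
    ∀ t ∈ Icc 0 T, σc t = σ₀ + σ₁ * (N₁ - τ) * t / (N₁ - (ζ * t + τ)) ∧
      (∀ s, σc t ≤ s → χc s t = N₁ * σ₀ + (ζ * t + τ) * (s - σ₀) + σ₁ * (N₁ - τ) * t ∧
        Nc s t = ζ * t + τ) := by
  have hlt : ∀ t ∈ Icc 0 T, ζ * t < N₁ - τ := fun t ht =>
    (mul_le_mul_of_nonneg_left ht.2 hζ).trans_lt hTT
  have hk : ∀ t ∈ Icc 0 T, 0 < N₁ - (ζ * t + τ) := fun t ht => by linarith [hlt t ht]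
  have h0T : (0:ℝ) ∈ Icc 0 T := ⟨le_rfl, hT.le⟩
  have hsm := hS.sigma_smooth
  have hdf : DifferentiableOn ℝ σc (Icc 0 T) := hsm.differentiableOn (by norm_num)
  have hu := ereg_uniqueDiffOn σc T hT hdf
  have hI := uniqueDiffOn_Icc hT
  -- affine formula
  have hχ : ∀ t ∈ Icc 0 T, ∀ s, σc t ≤ s →
      χc s t = N₁ * σc t + (ζ * t + τ) * (s - σc t) := by
    intro t ht s hs
    have hpos : 0 < ζ * t + τ := by
      have := mul_nonneg hζ ht.1
      linarith
    have hcont : ContinuousOn (fun x => χc x t - (ζ * t + τ) * x) (Icc (σc t) s) := by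
      have h1 : ContinuousOn (fun x => uc χc (x, t)) (Icc (σc t) s) :=
        hS.chi_cont.comp (f := fun x : ℝ => (x, t)) (by fun_prop)
          (fun x hx => ⟨(hσ₀.le.trans (hS.sigma_ge t ht)).trans hx.1, ht⟩)
      exact h1.sub (by fun_prop)
    rcases hs.eq_or_lt with h | h
    · rw [← h, hS.front t ht]; ring
    have hda : ∀ x ∈ Ioo (σc t) s, HasDerivAt (fun x => χc x t - (ζ * t + τ) * x) 0 x := by
      intro x hx
      have h1 := (hP t ht.1 (hlt t ht) x).2 hx.1
      have h2 : DifferentiableAt ℝ (fun x => χc x t) x := by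
        by_contra hcon
        rw [deriv_zero_of_not_differentiableAt hcon] at h1
        linarith
      have h3 := h2.hasDerivAt
      rw [h1] at h3
      exact (h3.sub ((hasDerivAt_id x).const_mul (ζ * t + τ))).congr_deriv (by ring)
    obtain ⟨c, hc, hceq⟩ := exists_hasDerivAt_eq_slope _ _ h hcont hda
    have hne : s - σc t ≠ 0 := by linarith
    rw [eq_div_iff hne, zero_mul] at hceq
    have := hS.front t ht
    linarith
  set w : ℝ → ℝ := fun t => (N₁ - (ζ * t + τ)) * σc t with hw
  have hχE : ∀ q ∈ Ereg σc T, uc χc q = w q.2 + (ζ * q.2 + τ) * q.1 := by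
    rintro ⟨s, t⟩ ⟨h1, h2⟩
    simp only [uc, hw] at *
    rw [hχ t h1 s h2]; ring
  have hwsm : ContDiffOn ℝ 2 w (Icc 0 T) := by
    rw [hw]
    exact ContDiffOn.mul (by fun_prop) hsm
  have hwdf : DifferentiableOn ℝ w (Icc 0 T) := hwsm.differentiableOn (by norm_num)
  have hw2 : DifferentiableOn ℝ (derivWithin w (Icc 0 T)) (Icc 0 T) :=
    (hwsm.derivWithin (m := 1) hI (by norm_num)).differentiableOn (by norm_num)
  have hN : ∀ q ∈ Ereg σc T, Nc q.1 q.2 = ζ * q.2 + τ := fun q hq => by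
    rw [hS.N_eq q hq]
    exact (pder_formula σc T hu (uc χc) w ζ τ _ hχE q hq
      (hwdf q.2 hq.1).hasDerivWithinAt).1
  have hw'' : ∀ t ∈ Icc 0 T, derivWithin (derivWithin w (Icc 0 T)) (Icc 0 T) t = 0 := by
    intro t ht
    have hm : (σc t, t) ∈ Ereg σc T := ⟨ht, le_rfl⟩
    have h := pder_second σc T hT hu (uc χc) w ζ τ hχE hwsm _ hm
    have h2 := hS.wave _ hm
    rw [h.1, h.2] at h2
    exact h2
  have hw'c := constant_of_derivWithin_zero hw2 (fun x hx => hw'' x ⟨hx.1, hx.2.le⟩)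
  have hσd : derivWithin σc (Icc 0 T) 0 = σ₁ := by
    rw [← hd0]
    apply derivWithin_congr_set
    filter_upwards [Iio_mem_nhds hT] with x hx
    exact propext ⟨fun h => h.1, fun h => ⟨h, (mem_Iio.mp hx).le⟩⟩
  have hw0 : derivWithin w (Icc 0 T) 0 = -ζ * σ₀ + (N₁ - τ) * σ₁ := by
    have h1 : HasDerivWithinAt (fun t : ℝ => N₁ - (ζ * t + τ)) (-ζ) (Icc 0 T) 0 := by
      simpa using ((((hasDerivAt_id (0:ℝ)).const_mul ζ).add_const τ).const_sub N₁).hasDerivWithinAt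
    have h2 := h1.mul (hdf 0 h0T).hasDerivWithinAt
    have h3 := h2.derivWithin (hI 0 h0T)
    rw [hσd, hS.sigma_init] at h3
    rw [hw]
    refine Eq.trans h3 ?_
    ring
  set c := -ζ * σ₀ + (N₁ - τ) * σ₁ with hc
  have hconst : ∀ t ∈ Icc 0 T, (fun x => w x - c * x) t = (fun x => w x - c * x) 0 := by
    apply constant_of_derivWithin_zero
    · exact hwdf.sub (by fun_prop)
    · intro x hx
      have hx' : x ∈ Icc 0 T := ⟨hx.1, hx.2.le⟩
      have h1 := (hwdf x hx').hasDerivWithinAt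
      rw [hw'c x hx', hw0] at h1
      have h2 := h1.sub ((hasDerivAt_id x).const_mul c).hasDerivWithinAt
      have h3 := h2.derivWithin (hI x hx')
      refine Eq.trans h3 ?_
      ring
  intro t ht
  have h1 := hconst t ht
  simp only [hw, hS.sigma_init, hc] at h1
  have h0 := (hk t ht).ne'
  have hσt : σc t = σ₀ + σ₁ * (N₁ - τ) * t / (N₁ - (ζ * t + τ)) := by
    apply mul_left_cancel₀ h0
    rw [mul_add, mul_div_cancel₀ _ h0]
    linear_combination h1
  refine ⟨hσt, fun s hs => ⟨?_, hN (s, t) ⟨ht, hs⟩⟩⟩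
  rw [hχ t ht s hs]
  linear_combination h1

/-- Proposition 4.1: the explicit two-parameter family of piece-wise constant stretched
motions.  With `σ(t) = σ₀ + σ₁(N₁-τ)t/(N₁-(ζt+τ))`, `χ` and `N` defined piecewise as in
(4.4), the pair `(χ, N)` is a classical shock solution on `[0,T]` for every
`0 < T < T(ζ)` (where `t < T(ζ)` iff `ζ t < N₁ - τ`), has `σ(0) = σ₀`,
`σ'(0) = σ₁`, shock speed `σ'(t) = σ₁(N₁-τ)²/(N₁-(ζt+τ))² ≥ σ₁ > 1`, piece-wise
constant stretch, and is the unique classical shock solution on `[0,T(ζ))` with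
piece-wise constant stretch of this form satisfying `σ(0) = σ₀` and `σ'(0) = σ₁`. -/
theorem piecewise_constant_stretched_motions
    (N₁ η τ ζ σ₀ σ₁ : ℝ)
    (hN₁ : 0 < N₁) (hη : 0 < η) (hηN : η < N₁) (hτη : η < τ) (hτN : τ < N₁) (hζ : 0 ≤ ζ)
    (hσ₀ : 0 < σ₀) (hσ₁ : 1 < σ₁)
    (σ : ℝ → ℝ) (hσdef : σ = fun t => σ₀ + σ₁ * (N₁ - τ) * t / (N₁ - (ζ * t + τ)))
    (χ : ℝ → ℝ → ℝ)
    (hχdef : χ = fun s t => if s ≤ σ t then N₁ * s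
      else N₁ * σ₀ + (ζ * t + τ) * (s - σ₀) + σ₁ * (N₁ - τ) * t)
    (N : ℝ → ℝ → ℝ)
    (hNdef : N = fun s t => if s < σ t then
        (ζ * t + τ) + (σ₁ * (N₁ - τ) ^ 2 / (N₁ - (ζ * t + τ)) ^ 2) ^ 2 * (N₁ - (ζ * t + τ))
      else ζ * t + τ) :
    (∀ T, 0 < T → ζ * T < N₁ - τ →
      IsShockSolution N₁ η τ ζ σ₀ T (fun s => χ s 0)
        (fun s => if s < σ₀ then 0 else ζ * (s - σ₀) + σ₁ * (N₁ - τ))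
        (fun s => N s 0) χ N σ) ∧
    σ 0 = σ₀ ∧ deriv σ 0 = σ₁ ∧
    (∀ t, 0 ≤ t → ζ * t < N₁ - τ →
      deriv σ t = σ₁ * (N₁ - τ) ^ 2 / (N₁ - (ζ * t + τ)) ^ 2 ∧ σ₁ ≤ deriv σ t) ∧
    (∀ t, 0 ≤ t → ζ * t < N₁ - τ → ∀ s : ℝ,
      (0 ≤ s → s < σ t → deriv (fun x => χ x t) s = N₁) ∧
      (σ t < s → deriv (fun x => χ x t) s = ζ * t + τ)) ∧
    (∀ χc Nc : ℝ → ℝ → ℝ, ∀ σc : ℝ → ℝ, ∀ χ₁c : ℝ → ℝ,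
      (∀ T, 0 < T → ζ * T < N₁ - τ →
        IsShockSolution N₁ η τ ζ σ₀ T (fun s => χc s 0) χ₁c (fun s => Nc s 0) χc Nc σc) →
      (∀ t, 0 ≤ t → ζ * t < N₁ - τ → ∀ s : ℝ,
        (0 ≤ s → s < σc t → deriv (fun x => χc x t) s = N₁) ∧
        (σc t < s → deriv (fun x => χc x t) s = ζ * t + τ)) →
      σc 0 = σ₀ → derivWithin σc (Ici 0) 0 = σ₁ →
      ∀ t, 0 ≤ t → ζ * t < N₁ - τ →
        σc t = σ t ∧ ∀ s, 0 ≤ s → χc s t = χ s t ∧ Nc s t = N s t) := by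
  have hfun : ∀ t, ζ * t < N₁ - τ →
      HasDerivAt σ (σ₁ * (N₁ - τ) ^ 2 / (N₁ - (ζ * t + τ)) ^ 2) t := by
    intro t ht
    rw [hσdef]
    exact front_hasDerivAt N₁ τ ζ σ₀ σ₁ t ht
  refine ⟨fun T hT hTT => shock_existence N₁ η τ ζ σ₀ σ₁ hτη hτN hζ hσ₀ hσ₁ σ hσdef χ hχdef
    N hNdef T hT hTT, by simp [hσdef], ?_, ?_, ?_, ?_⟩
  · have h : N₁ - τ ≠ 0 := by linarith
    rw [(hfun 0 (by linarith)).deriv]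
    simp only [mul_zero, zero_add]
    field_simp
  · intro t h0 ht
    rw [(hfun t ht).deriv]
    exact ⟨rfl, speed_ge N₁ τ ζ σ₁ t hτN hζ hσ₁ h0 ht⟩
  · intro t h0 ht s
    constructor
    · intro _ hs
      have h1 : HasDerivAt (fun x : ℝ => N₁ * x) N₁ s := by
        simpa using (hasDerivAt_id s).const_mul N₁
      refine (h1.congr_of_eventuallyEq ?_).deriv
      filter_upwards [Iio_mem_nhds hs] with x hx
      simp only [hχdef]
      rw [if_pos (le_of_lt hx)]
    · intro hs
      have h1 : HasDerivAt (fun x : ℝ => N₁ * σ₀ + (ζ * t + τ) * (x - σ₀) + σ₁ * (N₁ - τ) * t)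
          (ζ * t + τ) s := by
        simpa using (((((hasDerivAt_id s).sub_const σ₀).const_mul (ζ * t + τ)).const_add
          (N₁ * σ₀)).add_const (σ₁ * (N₁ - τ) * t))
      refine (h1.congr_of_eventuallyEq ?_).deriv
      filter_upwards [Ioi_mem_nhds hs] with x hx
      simp only [hχdef]
      rw [if_neg (not_le.mpr hx)]
  · intro χc Nc σc χ₁c hS hP _ hd t h0 ht
    obtain ⟨T, hT, htT, hTT⟩ := exists_later N₁ τ ζ t hζ h0 ht
    have htI : t ∈ Icc 0 T := ⟨h0, htT.le⟩
    have hST := hS T hT hTT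
    have hU := shock_uniqueness N₁ η τ ζ σ₀ σ₁ hζ hσ₀ χc Nc σc χ₁c T hT hTT hST hP hd hη hτη
    have hσσ : ∀ x ∈ Icc 0 T, σc x = σ x := fun x hx => by rw [(hU x hx).1, hσdef]
    have hdd : derivWithin σc (Icc 0 T) t = σ₁ * (N₁ - τ) ^ 2 / (N₁ - (ζ * t + τ)) ^ 2 := by
      rw [derivWithin_congr hσσ (hσσ t htI)]
      exact (hfun t ht).hasDerivWithinAt.derivWithin (uniqueDiffOn_Icc hT t htI)
    refine ⟨hσσ t htI, fun s hs => ⟨?_, ?_⟩⟩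
    · simp only [hχdef]
      split_ifs with h
      · exact hST.inext_chi t htI s ⟨hs, by rw [hσσ t htI]; exact h⟩
      · exact ((hU t htI).2 s (by rw [hσσ t htI]; exact (not_le.mp h).le)).1
    · simp only [hNdef]
      split_ifs with h
      · rw [hST.inext_N t htI s ⟨hs, by rw [hσσ t htI]; exact h⟩, hdd,
          ((hU t htI).2 (σc t) le_rfl).2]
      · exact ((hU t htI).2 s (by rw [hσσ t htI]; exact not_lt.mp h)).2
end
end

section
/- Instability under unweighted L∞ perturbations (Section 4.2): Assume ζ > 0, and let σ₀ ∈ (0,∞), σ₁ ∈ (1,∞). For every sufficiently small ε > 0 there exist R > σ₀ and classical shock front initial data (χ₀,χ₁,N₀) with initial shock front σ₀ such that sup_{s ≥ σ₀} |χ₀′(s) − τ| + sup_{s ≥ σ₀} |χ₁(s) − (ζ(s−σ₀) + σ₁(N₁−τ))| ≤ ε, while the unique classical shock solution with this initial data has maximal existence time T₊ = (N₁ − (τ+ε))/ζ < T(ζ), and for all t ∈ [0,T₊] and s ∈ [2R+t, 3R−t] the stretch satisfies χ_s(s,t) = ζt + τ + ε; in particular, the stretch reaches the inextensibility threshold away from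 the shock front before time T(ζ). -/
open Set Filter Topology

noncomputable section

/-- Geometry of the extensible region for a Lipschitz front. -/
lemma Ereg_geom {σ : ℝ → ℝ} {T : ℝ} (hT : 0 < T) (hσ : ContDiffOn ℝ 2 σ (Icc 0 T))
    {p : ℝ × ℝ} (hp : p ∈ Ereg σ T) :
    UniqueDiffWithinAt ℝ (Ereg σ T) p ∧ p ∈ closure (interior (Ereg σ T)) := by
  obtain ⟨K, hK⟩ := hσ.exists_lipschitzOnWith (by norm_num) (convex_Icc 0 T) isCompact_Icc
  obtain ⟨s, t⟩ := p
  obtain ⟨ht, hs⟩ := hp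
  simp only at ht hs
  set C : Set (ℝ × ℝ) := {q | q.2 ∈ Icc 0 T ∧ s + K * |q.2 - t| ≤ q.1} with hC
  have hsub : C ⊆ Ereg σ T := by
    rintro ⟨x, r⟩ ⟨hr, hx⟩
    refine ⟨hr, ?_⟩
    have := hK.dist_le_mul r hr t ht
    rw [Real.dist_eq, Real.dist_eq] at this
    have h2 := le_abs_self (σ r - σ t)
    simp only at hx ⊢
    linarith
  have hconv : Convex ℝ C := by
    rintro ⟨x, r⟩ ⟨hr, hx⟩ ⟨x', r'⟩ ⟨hr', hx'⟩ a b ha hb hab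
    refine ⟨convex_Icc 0 T hr hr' ha hb hab, ?_⟩
    simp only [Prod.smul_mk, Prod.mk_add_mk, smul_eq_mul] at hx hx' ⊢
    have e : a * r + b * r' - t = a * (r - t) + b * (r' - t) := by
      linear_combination t * hab
    have h1 : |a * r + b * r' - t| ≤ a * |r - t| + b * |r' - t| := by
      rw [e]
      refine (abs_add_le _ _).trans ?_
      rw [abs_mul, abs_mul, abs_of_nonneg ha, abs_of_nonneg hb]
    have hK0 : (0 : ℝ) ≤ K := K.2
    have h2 := mul_le_mul_of_nonneg_left h1 hK0
    have h3 := mul_le_mul_of_nonneg_left hx ha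
    have h4 := mul_le_mul_of_nonneg_left hx' hb
    have h5 : a * s + b * s = s := by rw [← add_mul, hab, one_mul]
    linarith
  have hint : (interior C).Nonempty := by
    have hop : IsOpen {q : ℝ × ℝ | q.2 ∈ Ioo 0 T ∧ s + K * |q.2 - t| < q.1} := by
      have o1 : IsOpen {q : ℝ × ℝ | q.2 ∈ Ioo 0 T} := isOpen_Ioo.preimage continuous_snd
      have o2 : IsOpen {q : ℝ × ℝ | s + K * |q.2 - t| < q.1} :=
        isOpen_lt (by fun_prop) (by fun_prop)
      exact o1.inter o2
    refine ⟨(s + K * |T / 2 - t| + 1, T / 2), ?_⟩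
    apply interior_maximal _ hop
    · exact ⟨⟨by simp only; linarith, by simp only; linarith⟩, by simp⟩
    · rintro q ⟨h1, h2⟩
      exact ⟨⟨h1.1.le, h1.2.le⟩, h2.le⟩
  have hmem : (s, t) ∈ C := ⟨ht, by simp⟩
  refine ⟨(uniqueDiffWithinAt_convex hconv hint (subset_closure hmem)).mono hsub, ?_⟩
  apply closure_mono (interior_mono hsub)
  rw [hconv.closure_interior_eq_closure_of_nonempty_interior hint]
  exact subset_closure hmem

lemma Ereg_uniqueDiffOn {σ : ℝ → ℝ} {T : ℝ} (hT : 0 < T) (hσ : ContDiffOn ℝ 2 σ (Icc 0 T)) :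
    UniqueDiffOn ℝ (Ereg σ T) := fun _ hp => (Ereg_geom hT hσ hp).1

/-- A front with speed larger than one: `σ` and `σ - id` are monotone. -/
lemma front_mono {σ : ℝ → ℝ} {T : ℝ} (hσ : ContDiffOn ℝ 2 σ (Icc 0 T))
    (h1 : ∀ t ∈ Icc 0 T, 1 < derivWithin σ (Icc 0 T) t) :
    MonotoneOn (fun t => σ t - t) (Icc 0 T) := by
  apply monotoneOn_of_deriv_nonneg (convex_Icc 0 T)
  · exact hσ.continuousOn.sub continuousOn_id
  · exact ((hσ.differentiableOn (by norm_num)).sub differentiableOn_id).mono interior_subset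
  · intro x hx
    have hd : DifferentiableAt ℝ σ x :=
      ((hσ.differentiableOn (by norm_num)) x (interior_subset hx)).differentiableAt
        (mem_interior_iff_mem_nhds.1 hx)
    have h2 := h1 x (interior_subset hx)
    rw [derivWithin_of_mem_nhds (mem_interior_iff_mem_nhds.1 hx)] at h2
    have := (hd.hasDerivAt.sub (hasDerivAt_id x)).deriv
    have e : deriv (fun t => σ t - t) x = deriv σ x - 1 := this
    rw [e]; linarith

/-- backward characteristics stay in the extensible region -/
lemma char_mem {σ : ℝ → ℝ} {T : ℝ} (hm : MonotoneOn (fun t => σ t - t) (Icc 0 T))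
    {c s t : ℝ} (hc : c = 1 ∨ c = -1) (hp : (s, t) ∈ Ereg σ T) :
    MapsTo (fun r : ℝ => (s + c * r, t - r)) (Icc 0 t) (Ereg σ T) := by
  intro r hr
  obtain ⟨ht, hs⟩ := hp
  simp only at ht hs
  have h1 : t - r ∈ Icc 0 T := ⟨by linarith [hr.2], by linarith [hr.1, ht.2]⟩
  have := hm h1 ht (by linarith [hr.1])
  simp only at this
  refine ⟨h1, ?_⟩
  simp only
  have := hr.1
  rcases hc with rfl | rfl <;> linarith

/-- chain rule along a backward characteristic -/
lemma char_deriv {σ : ℝ → ℝ} {T : ℝ} (hm : MonotoneOn (fun t => σ t - t) (Icc 0 T))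
    {c s t : ℝ} (hc : c = 1 ∨ c = -1) (hp : (s, t) ∈ Ereg σ T)
    {f : ℝ × ℝ → ℝ} (hf : DifferentiableOn ℝ f (Ereg σ T)) {r : ℝ} (hr : r ∈ Icc 0 t) :
    HasDerivWithinAt (fun r => f (s + c * r, t - r))
      (c * pder f (Ereg σ T) (1, 0) (s + c * r, t - r)
        - pder f (Ereg σ T) (0, 1) (s + c * r, t - r)) (Icc 0 t) r := by
  have hmap := char_mem hm hc hp
  have h1 := (hf _ (hmap hr)).hasFDerivWithinAt
  have h2 : HasDerivWithinAt (fun r : ℝ => (s + c * r, t - r)) (c, -1) (Icc 0 t) r := by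
    apply HasDerivAt.hasDerivWithinAt
    apply HasDerivAt.prodMk
    · simpa using ((hasDerivAt_id r).const_mul c).const_add s
    · simpa using (hasDerivAt_id r).const_sub t
  have h3 := HasFDerivWithinAt.comp_hasDerivWithinAt r h1 h2 hmap
  refine h3.congr_deriv ?_
  unfold pder
  have e : ((c, -1) : ℝ × ℝ) = c • (1, 0) - (0, 1) := by ext <;> simp
  rw [e, map_sub, map_smul, smul_eq_mul]

/-- constancy along a backward characteristic -/
lemma char_const {σ : ℝ → ℝ} {T : ℝ} (hm : MonotoneOn (fun t => σ t - t) (Icc 0 T))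
    {c s t : ℝ} (hc : c = 1 ∨ c = -1) (hp : (s, t) ∈ Ereg σ T)
    {f : ℝ × ℝ → ℝ} (hf : DifferentiableOn ℝ f (Ereg σ T))
    (h0 : ∀ q ∈ Ereg σ T, c * pder f (Ereg σ T) (1, 0) q = pder f (Ereg σ T) (0, 1) q) :
    f (s, t) = f (s + c * t, 0) := by
  have ht : 0 ≤ t := hp.1.1
  rcases ht.eq_or_lt with h | h
  · subst h; simp
  have hd := fun r hr => char_deriv hm hc hp hf (r := r) hr
  have := constant_of_derivWithin_zero (f := fun r => f (s + c * r, t - r)) (a := 0) (b := t)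
    (fun r hr => (hd r hr).differentiableWithinAt) (fun r hr => by
      have hr' : r ∈ Icc 0 t := ⟨hr.1, hr.2.le⟩
      rw [(hd r hr').derivWithin (uniqueDiffOn_Icc h r hr'), h0 _ (char_mem hm hc hp hr'), sub_self])
    t ⟨ht, le_rfl⟩
  simpa using this.symm

/-- Riemann invariants of the wave equation. -/
lemma wave_inv {σ : ℝ → ℝ} {T : ℝ} (hT : 0 < T) (hσ : ContDiffOn ℝ 2 σ (Icc 0 T))
    (hm : MonotoneOn (fun t => σ t - t) (Icc 0 T)) {u : ℝ × ℝ → ℝ}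
    (hu : ContDiffOn ℝ 2 u (Ereg σ T))
    (hw : ∀ p ∈ Ereg σ T,
      pder (pder u (Ereg σ T) (0, 1)) (Ereg σ T) (0, 1) p
      = pder (pder u (Ereg σ T) (1, 0)) (Ereg σ T) (1, 0) p)
    {c s t : ℝ} (hc : c = 1 ∨ c = -1) (hp : (s, t) ∈ Ereg σ T) :
    pder u (Ereg σ T) (0, 1) (s, t) + c * pder u (Ereg σ T) (1, 0) (s, t)
     = pder u (Ereg σ T) (0, 1) (s + c * t, 0) + c * pder u (Ereg σ T) (1, 0) (s + c * t, 0) := by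
  set E := Ereg σ T with hE
  have hU : UniqueDiffOn ℝ E := Ereg_uniqueDiffOn hT hσ
  have hD : DifferentiableOn ℝ (fderivWithin ℝ u E) E :=
    (hu.fderivWithin hU (m := 1) (by norm_num)).differentiableOn (by norm_num)
  have hpd : ∀ v, DifferentiableOn ℝ (pder u E v) E := fun v q hq =>
    (hD q hq).clm_apply (differentiableWithinAt_const v)
  have hpp : ∀ v w, ∀ q ∈ E, pder (pder u E v) E w q
      = fderivWithin ℝ (fderivWithin ℝ u E) E q w v := by
    intro v w q hq
    have := fderivWithin_clm_apply (hU q hq) (hD q hq) (differentiableWithinAt_const v)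
    unfold pder
    rw [this]
    simp
  refine char_const (f := fun q => pder u E (0, 1) q + c * pder u E (1, 0) q) hm hc hp
    ((hpd _).add ((hpd _).const_mul c)) ?_
  intro q hq
  have hsym : IsSymmSndFDerivWithinAt ℝ u E q :=
    (hu q hq).isSymmSndFDerivWithinAt (by simp) hU (Ereg_geom hT hσ hq).2 hq
  have hadd : ∀ w, pder (fun q => pder u E (0, 1) q + c * pder u E (1, 0) q) E w q
      = pder (pder u E (0, 1)) E w q + c * pder (pder u E (1, 0)) E w q := by
    intro w
    have h1 := (((hpd (0, 1)) q hq).hasFDerivWithinAt.add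
      (((hpd (1, 0)) q hq).hasFDerivWithinAt.const_mul c)).fderivWithin (hU q hq)
    have h2 : fderivWithin ℝ (fun q => pder u E (0, 1) q + c * pder u E (1, 0) q) E q = _ := h1
    unfold pder at h2 ⊢
    rw [h2]
    simp
  rw [hadd, hadd]
  have hw' := hw q hq
  have hmix : pder (pder u E (0, 1)) E (1, 0) q = pder (pder u E (1, 0)) E (0, 1) q := by
    rw [hpp _ _ q hq, hpp _ _ q hq]
    exact hsym _ _
  rw [hw', hmix]
  rcases hc with rfl | rfl <;> ring

/-- Properties of the plateau profile `φ` and its antiderivative `Φ`. -/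
structure IsProf (R : ℝ) (Φ φ : ℝ → ℝ) : Prop where
  smooth : ContDiff ℝ 2 Φ
  smooth' : ContDiff ℝ 1 φ
  der : ∀ s, HasDerivAt Φ (φ s) s
  nonneg : ∀ s, 0 ≤ φ s
  le_one : ∀ s, φ s ≤ 1
  left : ∀ s ≤ R, φ s = 0
  right : ∀ s, 4 * R ≤ s → φ s = 0
  mid : ∀ s, 2 * R ≤ s → s ≤ 3 * R → φ s = 1
  prim_left : ∀ s ≤ R, Φ s = 0
  prim_le : ∀ s, R ≤ s → Φ s ≤ s - R

lemma exists_prof {R : ℝ} (hR : 0 < R) : ∃ Φ φ : ℝ → ℝ, IsProf R Φ φ := by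
  set φ : ℝ → ℝ := fun s =>
    Real.smoothTransition ((s - R) / R) * Real.smoothTransition ((4 * R - s) / R) with hφ
  have hs : ContDiff ℝ 1 φ := by
    apply ContDiff.mul
    · exact (Real.smoothTransition.contDiff (n := 1)).comp (by fun_prop)
    · exact (Real.smoothTransition.contDiff (n := 1)).comp (by fun_prop)
  have hc : Continuous φ := hs.continuous
  have hder : ∀ s, HasDerivAt (fun u => ∫ x in R..u, φ x) (φ s) s := fun s =>
    (hc.integral_hasStrictDerivAt R s).hasDerivAt
  have hleft : ∀ s ≤ R, φ s = 0 := fun s h => by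
    have : (s - R) / R ≤ 0 := div_nonpos_of_nonpos_of_nonneg (by linarith) hR.le
    simp [hφ, Real.smoothTransition.zero_of_nonpos this]
  have hle : ∀ s, φ s ≤ 1 := fun s =>
    mul_le_one₀ (Real.smoothTransition.le_one _) (Real.smoothTransition.nonneg _)
      (Real.smoothTransition.le_one _)
  refine ⟨fun u => ∫ x in R..u, φ x, φ, ⟨?_, hs, hder, fun s => ?_, hle, hleft, fun s h => ?_,
    fun s h h' => ?_, fun s h => ?_, fun s h => ?_⟩⟩
  · have : ContDiff ℝ (1 + 1) (fun u => ∫ x in R..u, φ x) := by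
      rw [contDiff_succ_iff_deriv]
      refine ⟨fun s => (hder s).differentiableAt, by simp, ?_⟩
      rw [show deriv (fun u => ∫ x in R..u, φ x) = φ from funext fun s => (hder s).deriv]
      exact hs
    simpa [one_add_one_eq_two] using this
  · exact mul_nonneg (Real.smoothTransition.nonneg _) (Real.smoothTransition.nonneg _)
  · have : (4 * R - s) / R ≤ 0 := div_nonpos_of_nonpos_of_nonneg (by linarith) hR.le
    simp [hφ, Real.smoothTransition.zero_of_nonpos this]
  · have h1 : 1 ≤ (s - R) / R := by rw [le_div_iff₀ hR]; linarith
    have h2 : 1 ≤ (4 * R - s) / R := by rw [le_div_iff₀ hR]; linarith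
    simp [hφ, Real.smoothTransition.one_of_one_le h1, Real.smoothTransition.one_of_one_le h2]
  · have : ∫ x in R..s, φ x = ∫ x in R..s, (0 : ℝ) := by
      apply intervalIntegral.integral_congr
      intro x hx
      rw [uIcc_of_ge h] at hx
      exact hleft x hx.2
    simpa using this
  · have : ∫ x in R..s, φ x ≤ ∫ x in R..s, (1 : ℝ) :=
      intervalIntegral.integral_mono_on h (hc.intervalIntegrable _ _) (by simp)
        (fun x _ => hle x)
    simpa using this

/-- the global d'Alembert solution -/
def Dd (N₁ τ ζ σ₀ σ₁ ε : ℝ) (Φ : ℝ → ℝ) (p : ℝ × ℝ) : ℝ :=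
  N₁ * σ₀ + τ * (p.1 - σ₀) + ε * (Φ (p.1 + p.2) + Φ (p.1 - p.2)) / 2
    + ζ * (p.1 - σ₀) * p.2 + σ₁ * (N₁ - τ) * p.2

/-- its `s` derivative -/
def Dds (τ ζ ε : ℝ) (φ : ℝ → ℝ) (p : ℝ × ℝ) : ℝ :=
  τ + ε * (φ (p.1 + p.2) + φ (p.1 - p.2)) / 2 + ζ * p.2

/-- its `t` derivative -/
def Ddt (N₁ τ ζ σ₀ σ₁ ε : ℝ) (φ : ℝ → ℝ) (p : ℝ × ℝ) : ℝ :=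
  ε * (φ (p.1 + p.2) - φ (p.1 - p.2)) / 2 + ζ * (p.1 - σ₀) + σ₁ * (N₁ - τ)

lemma hasFDerivAt_add {f : ℝ → ℝ} {f' : ℝ} {p : ℝ × ℝ} (h : HasDerivAt f f' (p.1 + p.2)) :
    HasFDerivAt (fun q : ℝ × ℝ => f (q.1 + q.2))
      (f' • (ContinuousLinearMap.fst ℝ ℝ ℝ + ContinuousLinearMap.snd ℝ ℝ ℝ)) p :=
  h.comp_hasFDerivAt (h₂ := f) (f := fun q : ℝ × ℝ => q.1 + q.2) p
    (hasFDerivAt_fst.add hasFDerivAt_snd)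

lemma hasFDerivAt_sub {f : ℝ → ℝ} {f' : ℝ} {p : ℝ × ℝ} (h : HasDerivAt f f' (p.1 - p.2)) :
    HasFDerivAt (fun q : ℝ × ℝ => f (q.1 - q.2))
      (f' • (ContinuousLinearMap.fst ℝ ℝ ℝ - ContinuousLinearMap.snd ℝ ℝ ℝ)) p :=
  h.comp_hasFDerivAt (h₂ := f) (f := fun q : ℝ × ℝ => q.1 - q.2) p
    (hasFDerivAt_fst.sub hasFDerivAt_snd)

section
variable {N₁ τ ζ σ₀ σ₁ ε R : ℝ} {Φ φ : ℝ → ℝ}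

lemma Dd_contDiff (h : IsProf R Φ φ) : ContDiff ℝ 2 (Dd N₁ τ ζ σ₀ σ₁ ε Φ) := by
  have := h.smooth
  unfold Dd
  fun_prop

lemma Dds_contDiff (h : IsProf R Φ φ) : ContDiff ℝ 1 (Dds τ ζ ε φ) := by
  have := h.smooth'
  unfold Dds
  fun_prop

lemma Ddt_contDiff (h : IsProf R Φ φ) : ContDiff ℝ 1 (Ddt N₁ τ ζ σ₀ σ₁ ε φ) := by
  have := h.smooth'
  unfold Ddt
  fun_prop

lemma Dd_fderiv (h : IsProf R Φ φ) (p : ℝ × ℝ) :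
    fderiv ℝ (Dd N₁ τ ζ σ₀ σ₁ ε Φ) p (1, 0) = Dds τ ζ ε φ p ∧
    fderiv ℝ (Dd N₁ τ ζ σ₀ σ₁ ε Φ) p (0, 1) = Ddt N₁ τ ζ σ₀ σ₁ ε φ p := by
  have h1 := hasFDerivAt_add (p := p) (h.der (p.1 + p.2))
  have h2 := hasFDerivAt_sub (p := p) (h.der (p.1 - p.2))
  have hf : HasFDerivAt (fun q : ℝ × ℝ => q.1) (ContinuousLinearMap.fst ℝ ℝ ℝ) p :=
    hasFDerivAt_fst
  have hg : HasFDerivAt (fun q : ℝ × ℝ => q.2) (ContinuousLinearMap.snd ℝ ℝ ℝ) p :=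
    hasFDerivAt_snd
  have h3 := ((((((hf.sub_const σ₀).const_mul τ).const_add (N₁ * σ₀)).add
    ((h1.add h2).const_mul (ε / 2))).add
    (((hf.sub_const σ₀).const_mul ζ).mul hg)).add (hg.const_mul (σ₁ * (N₁ - τ))))
  have h4 := h3.congr_of_eventuallyEq (f₁ := Dd N₁ τ ζ σ₀ σ₁ ε Φ)
    (Eventually.of_forall fun q => by simp [Dd]; ring)
  rw [h4.fderiv]
  constructor
  · simp [Dds]; ring
  · simp [Ddt]; ring

lemma Dds_fderiv (h : IsProf R Φ φ) (p : ℝ × ℝ) :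
    fderiv ℝ (Dds τ ζ ε φ) p (1, 0) = ε * (deriv φ (p.1 + p.2) + deriv φ (p.1 - p.2)) / 2 := by
  have hd : ∀ s, HasDerivAt φ (deriv φ s) s := fun s =>
    (h.smooth'.differentiable (by norm_num) s).hasDerivAt
  have h1 := hasFDerivAt_add (p := p) (hd (p.1 + p.2))
  have h2 := hasFDerivAt_sub (p := p) (hd (p.1 - p.2))
  have hg : HasFDerivAt (fun q : ℝ × ℝ => q.2) (ContinuousLinearMap.snd ℝ ℝ ℝ) p :=
    hasFDerivAt_snd
  have h3 := ((((h1.add h2).const_mul (ε / 2)).const_add τ).add (hg.const_mul ζ))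
  have h4 := h3.congr_of_eventuallyEq (f₁ := Dds τ ζ ε φ)
    (Eventually.of_forall fun q => by simp [Dds]; ring)
  rw [h4.fderiv]
  simp; ring

lemma Ddt_fderiv (h : IsProf R Φ φ) (p : ℝ × ℝ) :
    fderiv ℝ (Ddt N₁ τ ζ σ₀ σ₁ ε φ) p (0, 1)
      = ε * (deriv φ (p.1 + p.2) + deriv φ (p.1 - p.2)) / 2 := by
  have hd : ∀ s, HasDerivAt φ (deriv φ s) s := fun s =>
    (h.smooth'.differentiable (by norm_num) s).hasDerivAt
  have h1 := hasFDerivAt_add (p := p) (hd (p.1 + p.2))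
  have h2 := hasFDerivAt_sub (p := p) (hd (p.1 - p.2))
  have hf : HasFDerivAt (fun q : ℝ × ℝ => q.1) (ContinuousLinearMap.fst ℝ ℝ ℝ) p :=
    hasFDerivAt_fst
  have h3 := ((((h1.sub h2).const_mul (ε / 2)).add ((hf.sub_const σ₀).const_mul ζ)).add_const
    (σ₁ * (N₁ - τ)))
  have h4 := h3.congr_of_eventuallyEq (f₁ := Ddt N₁ τ ζ σ₀ σ₁ ε φ)
    (Eventually.of_forall fun q => by simp [Ddt]; ring)
  rw [h4.fderiv]
  simp; ring

lemma pder_eq {f g : ℝ × ℝ → ℝ} {S : Set (ℝ × ℝ)} (hS : UniqueDiffOn ℝ S)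
    (hfg : ∀ q ∈ S, f q = g q) (hg : Differentiable ℝ g) (v : ℝ × ℝ) {p : ℝ × ℝ} (hp : p ∈ S) :
    pder f S v p = fderiv ℝ g p v := by
  unfold pder
  rw [fderivWithin_congr hfg (hfg p hp), (hg p).fderivWithin (hS p hp)]

end

/-- the explicit front -/
def sg (N₁ τ ζ σ₀ σ₁ t : ℝ) : ℝ := σ₀ + σ₁ * (N₁ - τ) * t / (N₁ - τ - ζ * t)

/-- the explicit tension in the inextensible region -/
def tn (N₁ τ ζ σ₁ t : ℝ) : ℝ :=
  (τ + ζ * t) + (σ₁ * (N₁ - τ) ^ 2 / (N₁ - τ - ζ * t) ^ 2) ^ 2 * (N₁ - (τ + ζ * t))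

/-- data -/
def c0 (N₁ τ σ₀ ε : ℝ) (Φ : ℝ → ℝ) (s : ℝ) : ℝ :=
  if s < σ₀ then N₁ * s else N₁ * σ₀ + τ * (s - σ₀) + ε * Φ s

def c1 (N₁ τ ζ σ₀ σ₁ : ℝ) (s : ℝ) : ℝ :=
  if s < σ₀ then 0 else ζ * (s - σ₀) + σ₁ * (N₁ - τ)

def n0 (N₁ τ σ₀ σ₁ ε : ℝ) (φ : ℝ → ℝ) (s : ℝ) : ℝ :=
  if s < σ₀ then τ + σ₁ ^ 2 * (N₁ - τ) else τ + ε * φ s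

/-- solution -/
def chiS (N₁ τ ζ σ₀ σ₁ ε : ℝ) (Φ : ℝ → ℝ) (s t : ℝ) : ℝ :=
  if s < sg N₁ τ ζ σ₀ σ₁ t then N₁ * s else Dd N₁ τ ζ σ₀ σ₁ ε Φ (s, t)

def tenS (N₁ τ ζ σ₀ σ₁ ε : ℝ) (φ : ℝ → ℝ) (s t : ℝ) : ℝ :=
  if s < sg N₁ τ ζ σ₀ σ₁ t then tn N₁ τ ζ σ₁ t else Dds τ ζ ε φ (s, t)

lemma c0_deriv {N₁ τ σ₀ ε R : ℝ} {Φ φ : ℝ → ℝ} (h : IsProf R Φ φ) :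
    ∀ s ∈ Ici σ₀, HasDerivWithinAt (c0 N₁ τ σ₀ ε Φ) (τ + ε * φ s) (Ici σ₀) s := by
  intro s hs
  have h1 : HasDerivAt (fun s => N₁ * σ₀ + τ * (s - σ₀) + ε * Φ s) (τ + ε * φ s) s := by
    have := ((((hasDerivAt_id s).sub_const σ₀).const_mul τ).const_add (N₁ * σ₀)).add
      ((h.der s).const_mul ε)
    exact this.congr_deriv (by simp)
  refine h1.hasDerivWithinAt.congr (fun x hx => ?_) ?_
  · simp [c0, not_lt.2 (mem_Ici.1 hx)]
  · simp [c0, not_lt.2 (mem_Ici.1 hs)]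

lemma data_ok {N₁ η τ ζ σ₀ σ₁ ε R : ℝ} {Φ φ : ℝ → ℝ} (h : IsProf R Φ φ)
    (hτη : η < τ) (hσ₀ : 0 < σ₀) (hσ₁ : 1 < σ₁) (hε : 0 < ε)
    (hε' : ε < N₁ - τ) (hR : σ₀ < R) :
    IsShockData N₁ η τ ζ σ₀ (c0 N₁ τ σ₀ ε Φ) (c1 N₁ τ ζ σ₀ σ₁) (n0 N₁ τ σ₀ σ₁ ε φ) := by
  have hb : 0 < N₁ - τ := hε.trans hε'
  have hdw : ∀ s ∈ Ici σ₀, derivWithin (c0 N₁ τ σ₀ ε Φ) (Ici σ₀) s = τ + ε * φ s := fun s hs =>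
    (c0_deriv h s hs).derivWithin (uniqueDiffOn_Ici σ₀ s hs)
  have e0 : EqOn (c0 N₁ τ σ₀ ε Φ) (fun s => N₁ * σ₀ + τ * (s - σ₀) + ε * Φ s) (Ici σ₀) :=
    fun x hx => by simp [c0, not_lt.2 (mem_Ici.1 hx)]
  have e1 : EqOn (c1 N₁ τ ζ σ₀ σ₁) (fun s => ζ * (s - σ₀) + σ₁ * (N₁ - τ)) (Ici σ₀) :=
    fun x hx => by simp [c1, not_lt.2 (mem_Ici.1 hx)]
  have e2 : EqOn (n0 N₁ τ σ₀ σ₁ ε φ) (fun s => τ + ε * φ s) (Ici σ₀) :=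
    fun x hx => by simp [n0, not_lt.2 (mem_Ici.1 hx)]
  have hφ0 : φ σ₀ = 0 := h.left σ₀ hR.le
  have hspeed : c1 N₁ τ ζ σ₀ σ₁ σ₀ / (N₁ - derivWithin (c0 N₁ τ σ₀ ε Φ) (Ici σ₀) σ₀) = σ₁ := by
    rw [hdw σ₀ self_mem_Ici, e1 self_mem_Ici, hφ0]
    simp only [mul_zero, add_zero, sub_self, zero_add]
    rw [mul_div_assoc, div_self hb.ne', mul_one]
  have hcφ := h.smooth'.continuous
  have hcΦ := h.smooth.continuous
  have hsΦ := h.smooth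
  have hsφ := h.smooth'
  have hev : ∀ᶠ s in atTop, s ∈ Ici σ₀ := Ici_mem_atTop σ₀
  refine ⟨hσ₀, ?_, ?_, ?_, ?_, ?_, ?_, ?_, ?_, ?_, ?_, ?_, ?_, ?_, ?_, ?_, ?_⟩
  · apply Continuous.continuousOn
    unfold c0
    have e : (fun s => if s < σ₀ then N₁ * s else N₁ * σ₀ + τ * (s - σ₀) + ε * Φ s)
      = fun s => if σ₀ ≤ s then N₁ * σ₀ + τ * (s - σ₀) + ε * Φ s else N₁ * s := by
      funext s; by_cases hs : s < σ₀
      · simp [hs]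
      · simp [hs, not_lt.1 hs]
    rw [e]
    apply Continuous.if_le (by fun_prop) (by fun_prop) (by fun_prop) (by fun_prop)
    intro s hs
    subst hs
    simp [h.prim_left σ₀ hR.le]
  · intro K
    obtain ⟨M, hM⟩ := (isCompact_Icc (a := (0 : ℝ)) (b := K)).exists_bound_of_continuousOn
      (f := fun s => ζ * (s - σ₀) + σ₁ * (N₁ - τ)) (by fun_prop)
    refine ⟨max M 0, fun s hs => ?_⟩
    unfold c1
    split_ifs
    · simp
    · exact (hM s hs).trans (le_max_left _ _)
  · intro K
    obtain ⟨M, hM⟩ := (isCompact_Icc (a := (0 : ℝ)) (b := K)).exists_bound_of_continuousOn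
      (f := fun s => τ + ε * φ s) (by fun_prop)
    refine ⟨max M |τ + σ₁ ^ 2 * (N₁ - τ)|, fun s hs => ?_⟩
    unfold n0
    split_ifs
    · exact le_max_right _ _
    · exact (hM s hs).trans (le_max_left _ _)
  · refine ContDiffOn.congr (ContDiff.contDiffOn ?_) e0
    fun_prop
  · refine ContDiffOn.congr (ContDiff.contDiffOn ?_) e1
    fun_prop
  · refine ContDiffOn.congr (ContDiff.contDiffOn ?_) e2
    fun_prop
  · intro s hs; rw [hdw s hs, e2 hs]
  · intro s hs; rw [e2 hs]
    have := mul_nonneg hε.le (h.nonneg s)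
    simp only; linarith
  · intro s hs; rw [e2 hs]
    have := mul_le_mul_of_nonneg_left (h.le_one s) hε.le
    simp only; linarith
  · refine tendsto_const_nhds.congr' ?_
    filter_upwards [hev, eventually_ge_atTop (4 * R)] with s hs hs'
    rw [hdw s hs, h.right s hs']; ring
  · refine tendsto_const_nhds.congr' ?_
    filter_upwards [hev] with s hs
    have : HasDerivWithinAt (c1 N₁ τ ζ σ₀ σ₁) ζ (Ici σ₀) s := by
      refine HasDerivWithinAt.congr ?_ e1 (e1 hs)
      have := ((((hasDerivAt_id s).sub_const σ₀).const_mul ζ).add_const (σ₁ * (N₁ - τ)))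
      simpa using this.hasDerivWithinAt
    exact (this.derivWithin (uniqueDiffOn_Ici σ₀ s hs)).symm
  · rw [e0 self_mem_Ici]; simp [h.prim_left σ₀ hR.le]
  · rw [hspeed]; exact hσ₁
  · intro s hs
    rcases hs.2.eq_or_lt with h' | h'
    · subst h'; rw [e0 self_mem_Ici]; simp [h.prim_left s hR.le]
    · simp [c0, h']
  · intro s hs; simp [c1, hs.2]
  · intro s hs
    rw [hspeed, e2 self_mem_Ici]
    simp [n0, hs.2, hφ0]

section
variable {N₁ η τ ζ σ₀ σ₁ ε R : ℝ} {Φ φ : ℝ → ℝ}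

lemma sg_facts (hζ : 0 < ζ) (hσ₁ : 1 < σ₁) (hε : 0 < ε) (hε' : ε < N₁ - τ)
    (hR : σ₀ + σ₁ * (N₁ - τ) * ((N₁ - (τ + ε)) / ζ) / ε + 2 * ((N₁ - (τ + ε)) / ζ) < R)
    {t : ℝ} (ht : 0 ≤ t) (ht' : t ≤ (N₁ - (τ + ε)) / ζ) :
    ε ≤ N₁ - τ - ζ * t ∧ sg N₁ τ ζ σ₀ σ₁ t + t ≤ R ∧ σ₀ + t ≤ sg N₁ τ ζ σ₀ σ₁ t := by
  have hb : 0 < N₁ - τ := hε.trans hε'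
  have h1 : ζ * t ≤ N₁ - (τ + ε) := by rw [le_div_iff₀ hζ] at ht'; linarith
  have h2 : ε ≤ N₁ - τ - ζ * t := by linarith
  have h3 : 0 < N₁ - τ - ζ * t := by linarith
  refine ⟨h2, ?_, ?_⟩
  · have : σ₁ * (N₁ - τ) * t / (N₁ - τ - ζ * t)
        ≤ σ₁ * (N₁ - τ) * ((N₁ - (τ + ε)) / ζ) / ε := by
      have hσb : 0 ≤ σ₁ * (N₁ - τ) := by positivity
      apply div_le_div₀ _ (mul_le_mul_of_nonneg_left ht' hσb) hε h2
      exact mul_nonneg hσb (ht.trans ht')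
    unfold sg
    linarith
  · have : t ≤ σ₁ * (N₁ - τ) * t / (N₁ - τ - ζ * t) := by
      rw [le_div_iff₀ h3]
      have h4 : N₁ - τ - ζ * t ≤ σ₁ * (N₁ - τ) := by nlinarith
      nlinarith
    unfold sg
    linarith

lemma sg_deriv {t : ℝ} (h : N₁ - τ - ζ * t ≠ 0) :
    HasDerivAt (sg N₁ τ ζ σ₀ σ₁) (σ₁ * (N₁ - τ) ^ 2 / (N₁ - τ - ζ * t) ^ 2) t := by
  have h1 : HasDerivAt (fun t => σ₁ * (N₁ - τ) * t) (σ₁ * (N₁ - τ)) t := by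
    simpa using (hasDerivAt_id t).const_mul (σ₁ * (N₁ - τ))
  have h2 : HasDerivAt (fun t => N₁ - τ - ζ * t) (-ζ) t := by
    simpa using ((hasDerivAt_id t).const_mul ζ).const_sub (N₁ - τ)
  have h3 := (h1.div h2 h).const_add σ₀
  refine h3.congr_deriv ?_
  congr 1
  ring

lemma front_eq (h : IsProf R Φ φ) {t : ℝ} (ht : 0 ≤ t) (hb : N₁ - τ - ζ * t ≠ 0)
    (hR : sg N₁ τ ζ σ₀ σ₁ t + t ≤ R) :
    Dd N₁ τ ζ σ₀ σ₁ ε Φ (sg N₁ τ ζ σ₀ σ₁ t, t) = N₁ * sg N₁ τ ζ σ₀ σ₁ t := by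
  have h1 : (sg N₁ τ ζ σ₀ σ₁ t - σ₀) * (N₁ - τ - ζ * t) = σ₁ * (N₁ - τ) * t := by
    unfold sg
    rw [add_sub_cancel_left, div_mul_cancel₀ _ hb]
  unfold Dd
  simp only
  rw [h.prim_left _ hR, h.prim_left _ (by linarith)]
  linear_combination -h1

lemma chiS_eq (σ₀ : ℝ) {q : ℝ × ℝ} (hq : sg N₁ τ ζ σ₀ σ₁ q.2 ≤ q.1) :
    uc (chiS N₁ τ ζ σ₀ σ₁ ε Φ) q = Dd N₁ τ ζ σ₀ σ₁ ε Φ q := by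
  simp [uc, chiS, not_lt.2 hq]

lemma tenS_eq (σ₀ : ℝ) {q : ℝ × ℝ} (hq : sg N₁ τ ζ σ₀ σ₁ q.2 ≤ q.1) :
    tenS N₁ τ ζ σ₀ σ₁ ε φ q.1 q.2 = Dds τ ζ ε φ q := by
  simp [tenS, not_lt.2 hq]

lemma sol_ok (h : IsProf R Φ φ)
    (hτη : η < τ) (hη : 0 < η) (hσ₀ : 0 < σ₀) (hσ₁ : 1 < σ₁) (hζ : 0 < ζ) (hε : 0 < ε)
    (hε' : ε < N₁ - τ)
    (hR : σ₀ + σ₁ * (N₁ - τ) * ((N₁ - (τ + ε)) / ζ) / ε + 2 * ((N₁ - (τ + ε)) / ζ) < R)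
    {T : ℝ} (hT : 0 < T) (hT' : T < (N₁ - (τ + ε)) / ζ) :
    IsShockSolution N₁ η τ ζ σ₀ T (c0 N₁ τ σ₀ ε Φ) (c1 N₁ τ ζ σ₀ σ₁) (n0 N₁ τ σ₀ σ₁ ε φ)
      (chiS N₁ τ ζ σ₀ σ₁ ε Φ) (tenS N₁ τ ζ σ₀ σ₁ ε φ) (sg N₁ τ ζ σ₀ σ₁) := by
  have hb : 0 < N₁ - τ := hε.trans hε'
  have hfacts := fun t (ht : t ∈ Icc 0 T) =>
    sg_facts hζ hσ₁ hε hε' hR ht.1 (ht.2.trans hT'.le)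
  have hpos : ∀ t ∈ Icc 0 T, 0 < N₁ - τ - ζ * t := fun t ht => hε.trans_le (hfacts t ht).1
  have hstrict : ∀ t ∈ Icc 0 T, ζ * t + τ + ε < N₁ := by
    intro t ht
    have := ht.2.trans_lt hT'
    rw [lt_div_iff₀ hζ] at this
    linarith
  have hσs : ContDiffOn ℝ 2 (sg N₁ τ ζ σ₀ σ₁) (Icc 0 T) := by
    unfold sg
    refine contDiffOn_const.add (ContDiffOn.div ?_ ?_ fun t ht => (hpos t ht).ne')
    · exact (ContDiff.contDiffOn (by fun_prop))
    · exact (ContDiff.contDiffOn (by fun_prop))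
  have hσd : ∀ t ∈ Icc 0 T, derivWithin (sg N₁ τ ζ σ₀ σ₁) (Icc 0 T) t
      = σ₁ * (N₁ - τ) ^ 2 / (N₁ - τ - ζ * t) ^ 2 := fun t ht =>
    (sg_deriv (hpos t ht).ne').hasDerivWithinAt.derivWithin (uniqueDiffOn_Icc hT t ht)
  have hU := Ereg_uniqueDiffOn hT hσs
  have hps : ∀ p ∈ Ereg (sg N₁ τ ζ σ₀ σ₁) T,
      pder (uc (chiS N₁ τ ζ σ₀ σ₁ ε Φ)) (Ereg (sg N₁ τ ζ σ₀ σ₁) T) (1, 0) p = Dds τ ζ ε φ p :=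
    fun p hp => (pder_eq hU (fun q hq => chiS_eq σ₀ hq.2)
      ((Dd_contDiff h).differentiable (by norm_num)) _ hp).trans (Dd_fderiv h p).1
  have hpt : ∀ p ∈ Ereg (sg N₁ τ ζ σ₀ σ₁) T,
      pder (uc (chiS N₁ τ ζ σ₀ σ₁ ε Φ)) (Ereg (sg N₁ τ ζ σ₀ σ₁) T) (0, 1) p
        = Ddt N₁ τ ζ σ₀ σ₁ ε φ p :=
    fun p hp => (pder_eq hU (fun q hq => chiS_eq σ₀ hq.2)
      ((Dd_contDiff h).differentiable (by norm_num)) _ hp).trans (Dd_fderiv h p).2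
  have hσmem : ∀ t ∈ Icc 0 T, (sg N₁ τ ζ σ₀ σ₁ t, t) ∈ Ereg (sg N₁ τ ζ σ₀ σ₁) T :=
    fun t ht => ⟨ht, le_rfl⟩
  have hDsσ : ∀ t ∈ Icc 0 T, Dds τ ζ ε φ (sg N₁ τ ζ σ₀ σ₁ t, t) = τ + ζ * t := by
    intro t ht
    have := (hfacts t ht).2.1
    unfold Dds
    simp only
    rw [h.left _ this, h.left _ (by linarith [ht.1])]
    ring
  have hDtσ : ∀ t ∈ Icc 0 T, Ddt N₁ τ ζ σ₀ σ₁ ε φ (sg N₁ τ ζ σ₀ σ₁ t, t)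
      = σ₁ * (N₁ - τ) ^ 2 / (N₁ - τ - ζ * t) := by
    intro t ht
    have := (hfacts t ht).2.1
    have hp := (hpos t ht).ne'
    unfold Ddt
    simp only
    rw [h.left _ this, h.left _ (by linarith [ht.1])]
    unfold sg
    rw [eq_div_iff hp]
    have : σ₁ * (N₁ - τ) * t / (N₁ - τ - ζ * t) * (N₁ - τ - ζ * t) = σ₁ * (N₁ - τ) * t :=
      div_mul_cancel₀ _ hp
    linear_combination ζ * this
  have hNσ : ∀ t ∈ Icc 0 T, tenS N₁ τ ζ σ₀ σ₁ ε φ (sg N₁ τ ζ σ₀ σ₁ t) t = τ + ζ * t :=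
    fun t ht => (tenS_eq (q := (sg N₁ τ ζ σ₀ σ₁ t, t)) σ₀ le_rfl).trans (hDsσ t ht)
  have hgt : ∀ p ∈ Ereg (sg N₁ τ ζ σ₀ σ₁) T, η < Dds τ ζ ε φ p := by
    intro p hp
    have h1 := mul_nonneg hε.le (add_nonneg (h.nonneg (p.1 + p.2)) (h.nonneg (p.1 - p.2)))
    have h2 := mul_nonneg hζ.le hp.1.1
    unfold Dds
    linarith
  have hlt : ∀ p ∈ Ereg (sg N₁ τ ζ σ₀ σ₁) T, Dds τ ζ ε φ p < N₁ := by
    intro p hp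
    have h1 := mul_le_mul_of_nonneg_left
      (add_le_add (h.le_one (p.1 + p.2)) (h.le_one (p.1 - p.2))) hε.le
    have h2 := hstrict _ hp.1
    unfold Dds
    linarith
  have hd1 : ∀ t ∈ Icc 0 T, 1 < σ₁ * (N₁ - τ) ^ 2 / (N₁ - τ - ζ * t) ^ 2 := by
    intro t ht
    have hp := hpos t ht
    rw [lt_div_iff₀ (by positivity), one_mul]
    have h1 : N₁ - τ - ζ * t ≤ N₁ - τ := by nlinarith [ht.1]
    have h2 : (N₁ - τ - ζ * t) ^ 2 ≤ (N₁ - τ) ^ 2 := pow_le_pow_left₀ hp.le h1 2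
    have h3 : 0 < (N₁ - τ) ^ 2 := by positivity
    nlinarith
  have hsub : ∀ p ∈ Ereg (sg N₁ τ ζ σ₀ σ₁) T, σ₀ ≤ p.1 := fun p hp => by
    have := (hfacts _ hp.1).2.2
    have := hp.1.1
    have := hp.2
    linarith
  have hfront : ∀ t ∈ Icc 0 T, Dd N₁ τ ζ σ₀ σ₁ ε Φ (sg N₁ τ ζ σ₀ σ₁ t, t)
      = N₁ * sg N₁ τ ζ σ₀ σ₁ t := fun t ht =>
    front_eq h ht.1 (hpos t ht).ne' (hfacts t ht).2.1
  have hsg0 : sg N₁ τ ζ σ₀ σ₁ 0 = σ₀ := by simp [sg]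
  have h0mem : (0 : ℝ) ∈ Icc 0 T := ⟨le_rfl, hT.le⟩
  have hfin : ∀ t ∈ Icc 0 T, N₁ < tn N₁ τ ζ σ₁ t := by
    intro t ht
    have h1 := hd1 t ht
    have hp := hpos t ht
    unfold tn
    set d := σ₁ * (N₁ - τ) ^ 2 / (N₁ - τ - ζ * t) ^ 2
    have h2 : 1 < d ^ 2 := by nlinarith
    nlinarith
  have hcD := (Dd_contDiff (N₁ := N₁) (τ := τ) (ζ := ζ) (σ₀ := σ₀) (σ₁ := σ₁) (ε := ε) h).continuous
  refine ⟨?_, ?_, ?_, hσs, ?_, hsg0, ?_, ?_, ?_, ?_, ?_, ?_, ?_, ?_, ?_, ?_, ?_, ?_, ?_, ?_, ?_⟩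
  · have hc : ContinuousOn (fun p : ℝ × ℝ => sg N₁ τ ζ σ₀ σ₁ p.2) (Ici 0 ×ˢ Icc 0 T) :=
      hσs.continuousOn.comp continuousOn_snd fun p hp => hp.2
    have hc2 : ContinuousOn (fun p : ℝ × ℝ => N₁ * min p.1 (sg N₁ τ ζ σ₀ σ₁ p.2)
        + Dd N₁ τ ζ σ₀ σ₁ ε Φ (max p.1 (sg N₁ τ ζ σ₀ σ₁ p.2), p.2)
        - Dd N₁ τ ζ σ₀ σ₁ ε Φ (sg N₁ τ ζ σ₀ σ₁ p.2, p.2)) (Ici 0 ×ˢ Icc 0 T) := by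
      refine ContinuousOn.sub (ContinuousOn.add ?_ ?_) ?_
      · exact continuousOn_const.mul (continuousOn_fst.inf hc)
      · exact hcD.comp_continuousOn ((continuousOn_fst.sup hc).prodMk continuousOn_snd)
      · exact hcD.comp_continuousOn (hc.prodMk continuousOn_snd)
    refine hc2.congr fun p hp => ?_
    unfold uc chiS
    split_ifs with hs
    · simp only
      rw [min_eq_left hs.le, max_eq_right hs.le]; ring
    · simp only
      rw [min_eq_right (not_lt.1 hs), max_eq_left (not_lt.1 hs), hfront p.2 hp.2]; ring
  · intro K
    obtain ⟨M, hM⟩ := ((isCompact_Icc (a := σ₀) (b := K)).prod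
      (isCompact_Icc (a := (0 : ℝ)) (b := T))).exists_bound_of_continuousOn
      (f := Ddt N₁ τ ζ σ₀ σ₁ ε φ) (Ddt_contDiff h).continuous.continuousOn
    refine ⟨M, fun p hp hpK => ?_⟩
    rw [hpt p hp]
    exact hM p ⟨⟨hsub p hp, hpK⟩, hp.1⟩
  · intro K
    have hcn : ContinuousOn (tn N₁ τ ζ σ₁) (Icc 0 T) := by
      unfold tn
      refine ContinuousOn.add (by fun_prop) (ContinuousOn.mul (ContinuousOn.pow
        (ContinuousOn.div (by fun_prop) (by fun_prop) fun t ht => ?_) _) (by fun_prop))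
      have := hpos t ht
      positivity
    obtain ⟨M, hM⟩ := (isCompact_Icc (a := (0 : ℝ)) (b := T)).exists_bound_of_continuousOn hcn
    refine ⟨max M N₁, fun s hs t ht => ?_⟩
    by_cases hst : s < sg N₁ τ ζ σ₀ σ₁ t
    · have : tenS N₁ τ ζ σ₀ σ₁ ε φ s t = tn N₁ τ ζ σ₁ t := by simp [tenS, hst]
      rw [this]
      exact (hM t ht).trans (le_max_left _ _)
    · have hmem : (s, t) ∈ Ereg (sg N₁ τ ζ σ₀ σ₁) T := ⟨ht, not_lt.1 hst⟩
      have : tenS N₁ τ ζ σ₀ σ₁ ε φ s t = Dds τ ζ ε φ (s, t) := tenS_eq (q := (s, t)) σ₀ hmem.2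
      rw [this, abs_of_pos (hη.trans (hgt _ hmem))]
      exact (hlt _ hmem).le.trans (le_max_right _ _)
  · intro t ht
    linarith [(hfacts t ht).2.2, ht.1]
  · exact (Dd_contDiff h).contDiffOn.congr fun q hq => chiS_eq σ₀ hq.2
  · exact (Dds_contDiff h).contDiffOn.congr fun q hq => tenS_eq σ₀ hq.2
  · intro p hp
    rw [hps p hp]; exact tenS_eq σ₀ hp.2
  · intro p hp
    rw [tenS_eq σ₀ hp.2]; exact hgt p hp
  · intro p hp
    rw [tenS_eq σ₀ hp.2]; exact hlt p hp
  · intro t ht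
    exact (chiS_eq (q := (sg N₁ τ ζ σ₀ σ₁ t, t)) σ₀ le_rfl).trans (hfront t ht)
  · intro t ht
    have hp := (hpos t ht).ne'
    rw [hσd t ht, hpt _ (hσmem t ht), hDtσ t ht, hNσ t ht,
      show N₁ - (τ + ζ * t) = N₁ - τ - ζ * t by ring, div_div, sq (N₁ - τ - ζ * t)]
  · intro t ht
    rw [hσd t ht]; exact hd1 t ht
  · intro t ht s hs
    rcases hs.2.eq_or_lt with h' | h'
    · rw [h']; exact (chiS_eq (q := (sg N₁ τ ζ σ₀ σ₁ t, t)) σ₀ le_rfl).trans (hfront t ht)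
    · simp [chiS, h']
  · intro t ht s hs
    rw [hσd t ht, hNσ t ht]
    simp [tenS, hs.2, tn]
  · intro t ht s hs
    have : tenS N₁ τ ζ σ₀ σ₁ ε φ s t = tn N₁ τ ζ σ₁ t := by simp [tenS, hs.2]
    rw [this]; exact hfin t ht
  · intro p hp
    rw [pder_eq hU hpt ((Ddt_contDiff h).differentiable (by norm_num)) _ hp,
      pder_eq hU hps ((Dds_contDiff h).differentiable (by norm_num)) _ hp,
      Ddt_fderiv h, Dds_fderiv h]
  · intro t ht
    refine tendsto_const_nhds.congr' ?_
    filter_upwards [eventually_ge_atTop (sg N₁ τ ζ σ₀ σ₁ t), eventually_ge_atTop (4 * R + t)]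
      with s hs hs'
    rw [hps (s, t) ⟨ht, hs⟩]
    unfold Dds
    simp only
    rw [h.right _ (by linarith [ht.1]), h.right _ (by linarith)]
    ring
  · intro s hs
    have hs' := mem_Ici.1 hs
    simp [chiS, hsg0, not_lt.2 hs', c0, Dd]
    ring
  · intro s hs
    have hs' := mem_Ici.1 hs
    rw [hpt (s, 0) ⟨h0mem, by simpa [hsg0] using hs'⟩]
    simp [Ddt, c1, not_lt.2 hs']

lemma no_sol (h : IsProf R Φ φ)
    (hσ₀ : 0 < σ₀) (hσ₁ : 1 < σ₁) (hζ : 0 < ζ) (hε : 0 < ε)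
    (hε' : ε < N₁ - τ)
    (hR : σ₀ + σ₁ * (N₁ - τ) * ((N₁ - (τ + ε)) / ζ) / ε + 2 * ((N₁ - (τ + ε)) / ζ) < R)
    {T : ℝ} (hT' : (N₁ - (τ + ε)) / ζ ≤ T) {χ N : ℝ → ℝ → ℝ} {σ : ℝ → ℝ}
    (hs : IsShockSolution N₁ η τ ζ σ₀ T (c0 N₁ τ σ₀ ε Φ) (c1 N₁ τ ζ σ₀ σ₁)
      (n0 N₁ τ σ₀ σ₁ ε φ) χ N σ) : False := by
  have hb : 0 < N₁ - τ := hε.trans hε'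
  set P := (N₁ - (τ + ε)) / ζ with hP
  have hPpos : 0 < P := div_pos (by linarith) hζ
  have hζP : ζ * P = N₁ - (τ + ε) := by rw [hP]; field_simp
  have hT : 0 < T := hPpos.trans_le hT'
  have hU := Ereg_uniqueDiffOn hT hs.sigma_smooth
  have hm := front_mono hs.sigma_smooth hs.sigma_der_gt
  set E := Ereg σ T with hE
  have h0E : ∀ x, σ₀ ≤ x → (x, (0 : ℝ)) ∈ E := fun x hx =>
    ⟨⟨le_rfl, hT.le⟩, by simpa [hs.sigma_init] using hx⟩
  have hudiff : DifferentiableOn ℝ (uc χ) E := hs.chi_smooth.differentiableOn (by norm_num)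
  have hi_t : ∀ x, σ₀ ≤ x → pder (uc χ) E (0, 1) (x, 0) = ζ * (x - σ₀) + σ₁ * (N₁ - τ) := by
    intro x hx
    rw [hs.init_chit x hx]
    simp [c1, not_lt.2 hx]
  have hi_s : ∀ x, σ₀ ≤ x → pder (uc χ) E (1, 0) (x, 0) = τ + ε * φ x := by
    intro x hx
    have h1 := (hudiff (x, 0) (h0E x hx)).hasFDerivWithinAt
    have h2 : HasDerivWithinAt (fun r : ℝ => (r, (0 : ℝ))) (1, 0) (Ici σ₀) x :=
      ((hasDerivAt_id x).prodMk (hasDerivAt_const x (0 : ℝ))).hasDerivWithinAt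
    have h3 := HasFDerivWithinAt.comp_hasDerivWithinAt x h1 h2 (fun r hr => h0E r hr)
    have h4 : HasDerivWithinAt (c0 N₁ τ σ₀ ε Φ) (fderivWithin ℝ (uc χ) E (x, 0) (1, 0))
        (Ici σ₀) x :=
      h3.congr (fun r hr => (hs.init_chi r hr).symm) (hs.init_chi x hx).symm
    exact (uniqueDiffOn_Ici σ₀ x hx).eq_deriv _ h4 (c0_deriv h x hx)
  have hmem0 : ∀ s t, (s, t) ∈ E → σ₀ ≤ s - t ∧ 0 ≤ t := by
    intro s t hp
    have := hm ⟨le_rfl, hT.le⟩ hp.1 hp.1.1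
    simp only [hs.sigma_init] at this
    have h2 := hp.2
    simp only at h2
    exact ⟨by linarith, hp.1.1⟩
  have hinv : ∀ s t, (s, t) ∈ E → pder (uc χ) E (1, 0) (s, t) = Dds τ ζ ε φ (s, t) ∧
      pder (uc χ) E (0, 1) (s, t) = Ddt N₁ τ ζ σ₀ σ₁ ε φ (s, t) := by
    intro s t hp
    obtain ⟨h1, h2⟩ := hmem0 s t hp
    have a := wave_inv hT hs.sigma_smooth hm hs.chi_smooth hs.wave (c := 1) (Or.inl rfl) hp
    have b := wave_inv hT hs.sigma_smooth hm hs.chi_smooth hs.wave (c := -1) (Or.inr rfl) hp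
    rw [hi_t _ (by linarith), hi_s _ (by linarith)] at a b
    rw [show s + 1 * t = s + t by ring] at a
    rw [show s + -1 * t = s - t by ring] at b
    unfold Dds Ddt
    constructor <;> simp only <;> linarith
  have hDd := (Dd_contDiff (N₁ := N₁) (τ := τ) (ζ := ζ) (σ₀ := σ₀) (σ₁ := σ₁) (ε := ε) h)
  have hDdiff : Differentiable ℝ (Dd N₁ τ ζ σ₀ σ₁ ε Φ) := hDd.differentiable (by norm_num)
  have hDE : ∀ v, ∀ q ∈ E, pder (fun q => uc χ q - Dd N₁ τ ζ σ₀ σ₁ ε Φ q) E v q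
      = pder (uc χ) E v q - fderiv ℝ (Dd N₁ τ ζ σ₀ σ₁ ε Φ) q v := by
    intro v q hq
    have := ((hudiff q hq).hasFDerivWithinAt.sub
      (hDdiff q).hasFDerivAt.hasFDerivWithinAt).fderivWithin (hU q hq)
    have e : fderivWithin ℝ (fun q => uc χ q - Dd N₁ τ ζ σ₀ σ₁ ε Φ q) E q = _ := this
    unfold pder
    rw [e]
    rfl
  have heq : ∀ s t, (s, t) ∈ E → χ s t = Dd N₁ τ ζ σ₀ σ₁ ε Φ (s, t) := by
    intro s t hp
    obtain ⟨h1, h2⟩ := hmem0 s t hp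
    have := char_const (f := fun q => uc χ q - Dd N₁ τ ζ σ₀ σ₁ ε Φ q) hm (c := 1) (Or.inl rfl) hp
      (hudiff.sub hDdiff.differentiableOn) (by
        rintro ⟨x, r⟩ hq
        rw [hDE _ _ hq, hDE _ _ hq, (Dd_fderiv h _).1, (Dd_fderiv h _).2, (hinv x r hq).1,
          (hinv x r hq).2]
        ring)
    have e0 : χ (s + 1 * t) 0 = Dd N₁ τ ζ σ₀ σ₁ ε Φ (s + 1 * t, 0) := by
      rw [hs.init_chi _ (by simp only [mem_Ici]; linarith)]
      have : ¬ (s + t < σ₀) := by linarith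
      simp [c0, this, Dd]
      ring
    simp only [uc] at this
    linarith
  have hPmem : P ∈ Icc 0 T := ⟨hPpos.le, hT'⟩
  have hf := hs.front P hPmem
  rw [heq (σ P) P ⟨hPmem, le_rfl⟩] at hf
  unfold Dd at hf
  simp only at hf
  set S := σ P with hS
  set Y := σ₁ * (N₁ - τ) * P / ε with hY
  have hYe : Y * ε = σ₁ * (N₁ - τ) * P := div_mul_cancel₀ _ hε.ne'
  have hkey : S - σ₀ - (Φ (S + P) + Φ (S - P)) / 2 = Y := by
    have : ε * (S - σ₀ - (Φ (S + P) + Φ (S - P)) / 2) = ε * Y := by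
      linear_combination (-1) * hf - hYe + (S - σ₀) * hζP
    exact mul_left_cancel₀ hε.ne' this
  have hY0 : 0 ≤ Y := by positivity
  have hSlt : S < R + P := by
    by_contra hcon
    have h1 := h.prim_le (S + P) (by linarith)
    have h2 := h.prim_le (S - P) (by linarith)
    linarith
  have hmem : (2 * R + P, P) ∈ E := ⟨hPmem, by simp only; linarith⟩
  have hN := hs.N_lt _ hmem
  rw [hs.N_eq _ hmem, (hinv _ _ hmem).1] at hN
  unfold Dds at hN
  simp only at hN
  rw [h.mid _ (by linarith) (by linarith), h.mid _ (by linarith) (by linarith)] at hN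
  linarith

end

/-- Instability under unweighted `L^∞` perturbations (Section 4.2): for `ζ > 0` and every
sufficiently small `ε > 0` there are `R > σ₀` and classical shock front initial data
which is `ε`-close in `L^∞` to the piece-wise constant stretched data (i.e.
`sup |χ₀' - τ| + sup |χ₁ - (ζ(s-σ₀) + σ₁(N₁-τ))| ≤ ε`), yet the corresponding shock
solution has maximal existence time `T₊ = (N₁ - (τ+ε))/ζ < T(ζ)`, and on the material
segments `[2R+t, 3R-t]` the stretch equals `ζ t + τ + ε`, reaching the inextensibility
threshold away from the shock front before the time `T(ζ)`. -/
theorem instability_unweighted_perturbations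
    (N₁ η τ ζ σ₀ σ₁ : ℝ)
    (hN₁ : 0 < N₁) (hη : 0 < η) (hηN : η < N₁) (hτη : η < τ) (hτN : τ < N₁) (hζ : 0 < ζ)
    (hσ₀ : 0 < σ₀) (hσ₁ : 1 < σ₁) :
    ∃ ε₁ > (0 : ℝ), ∀ ε, 0 < ε → ε < ε₁ →
      ∃ R, σ₀ < R ∧ ∃ χ₀ χ₁ N₀ : ℝ → ℝ,
        IsShockData N₁ η τ ζ σ₀ χ₀ χ₁ N₀ ∧
        (∀ s ∈ Ici σ₀, ∀ s' ∈ Ici σ₀,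
          |derivWithin χ₀ (Ici σ₀) s - τ|
            + |χ₁ s' - (ζ * (s' - σ₀) + σ₁ * (N₁ - τ))| ≤ ε) ∧
        ∃ χ N : ℝ → ℝ → ℝ, ∃ σ : ℝ → ℝ,
          (∀ T, 0 < T → T < (N₁ - (τ + ε)) / ζ →
            IsShockSolution N₁ η τ ζ σ₀ T χ₀ χ₁ N₀ χ N σ) ∧
          (∀ T, (N₁ - (τ + ε)) / ζ ≤ T →
            ¬ ∃ χ' N' : ℝ → ℝ → ℝ, ∃ σ' : ℝ → ℝ,
              IsShockSolution N₁ η τ ζ σ₀ T χ₀ χ₁ N₀ χ' N' σ') ∧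
          ∀ t, 0 ≤ t → t ≤ (N₁ - (τ + ε)) / ζ →
            ∀ s, 2 * R + t ≤ s → s ≤ 3 * R - t →
              deriv (fun x => χ x t) s = ζ * t + τ + ε := by
  refine ⟨N₁ - τ, by linarith, fun ε hε hε' => ?_⟩
  have hb : 0 < N₁ - τ := by linarith
  have hPpos : 0 < (N₁ - (τ + ε)) / ζ := div_pos (by linarith) hζ
  have hY : 0 < σ₁ * (N₁ - τ) * ((N₁ - (τ + ε)) / ζ) / ε := by
    have : 0 < σ₁ := by linarith
    positivity
  obtain ⟨R, hR⟩ := exists_gt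
    (σ₀ + σ₁ * (N₁ - τ) * ((N₁ - (τ + ε)) / ζ) / ε + 2 * ((N₁ - (τ + ε)) / ζ))
  have hσR : σ₀ < R := by linarith
  obtain ⟨Φ, φ, h⟩ := exists_prof (hσ₀.trans hσR)
  refine ⟨R, hσR, c0 N₁ τ σ₀ ε Φ, c1 N₁ τ ζ σ₀ σ₁, n0 N₁ τ σ₀ σ₁ ε φ,
    data_ok h hτη hσ₀ hσ₁ hε hε' hσR, ?_, chiS N₁ τ ζ σ₀ σ₁ ε Φ, tenS N₁ τ ζ σ₀ σ₁ ε φ,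
    sg N₁ τ ζ σ₀ σ₁, ?_, ?_, ?_⟩
  · intro s hs s' hs'
    rw [(c0_deriv h s hs).derivWithin (uniqueDiffOn_Ici σ₀ s hs)]
    have h1 : |τ + ε * φ s - τ| ≤ ε := by
      rw [add_sub_cancel_left, abs_of_nonneg (mul_nonneg hε.le (h.nonneg s))]
      nlinarith [h.le_one s]
    simpa [c1, not_lt.2 (mem_Ici.1 hs')] using h1
  · intro T hT hT'
    exact sol_ok h hτη hη hσ₀ hσ₁ hζ hε hε' hR hT hT'
  · rintro T hT ⟨χ, N, σ, hs⟩
    exact no_sol h hσ₀ hσ₁ hζ hε hε' hR hT hs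
  · intro t ht ht' s hs hs'
    obtain ⟨-, h2, -⟩ := sg_facts hζ hσ₁ hε hε' hR ht ht'
    have hlt : sg N₁ τ ζ σ₀ σ₁ t < s := by linarith
    have hev : (fun x => chiS N₁ τ ζ σ₀ σ₁ ε Φ x t)
        =ᶠ[𝓝 s] fun x => Dd N₁ τ ζ σ₀ σ₁ ε Φ (x, t) := by
      filter_upwards [lt_mem_nhds hlt] with x hx
      exact chiS_eq (q := (x, t)) σ₀ hx.le
    rw [hev.deriv_eq]
    have h3 := ((Dd_contDiff (N₁ := N₁) (τ := τ) (ζ := ζ) (σ₀ := σ₀) (σ₁ := σ₁) (ε := ε)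
      h).differentiable (by norm_num) (s, t)).hasFDerivAt
    have h4 : HasDerivAt (fun x : ℝ => (x, t)) (1, 0) s :=
      (hasDerivAt_id s).prodMk (hasDerivAt_const s t)
    have h5 := (HasFDerivAt.comp_hasDerivAt s h3 h4).deriv
    have h6 : deriv (fun x => Dd N₁ τ ζ σ₀ σ₁ ε Φ (x, t)) s = _ := h5
    rw [h6, (Dd_fderiv h (s, t)).1]
    unfold Dds
    simp only
    rw [h.mid _ (by linarith) (by linarith), h.mid _ (by linarith) (by linarith)]
    ring
end
end
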